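/- arXiv:math/0503307 — 5 statements merged into one kernel-verified Lean document; each statement's English description precedes it below -/
import Mathlib

section
/- Let α = (α₁, …, α_r) be a partition of ℓ ≥ 0. For each k ≥ ℓ let n_k be any integer with n_k ≥ k + α₁ and n_k − ℓ ≥ α₁, and let a(k) denote the number of Kronecker tableaux of length k, initial shape (n_k) and final shape (n_k − ℓ, α₁, …, α_r) (this number does not depend on the choice of n_k). Then in the formal power series ring ℚ[[x]] one has Σ_{k ≥ ℓ} a(k) · x^k / k! = (f^{α} / ℓ!) · exp(exp(x) − x − 1) · (exp(x) − 1)^ℓ, where exp denotes the formal exponential series. -/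
open Finset

namespace KroneckerPaper

/-- A (removable) corner of a Young diagram: a cell with no cell below it nor to its right
(in English notation; equivalently, in French notation, a cell at the right end of its row
with no cell above it). -/
def IsCorner (μ : YoungDiagram) (c : ℕ × ℕ) : Prop :=
  c ∈ μ ∧ (c.1 + 1, c.2) ∉ μ ∧ (c.1, c.2 + 1) ∉ μ

/-- The *first corner* of a Young diagram: the unique corner lying on a row of maximal
length. -/
def IsFirstCorner (μ : YoungDiagram) (c : ℕ × ℕ) : Prop :=
  IsCorner μ c ∧ μ.rowLen c.1 = μ.rowLen 0

/-- `μ'` is obtained from `μ` by adding one new cell which is a corner of `μ'`. -/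
def AddCorner (μ μ' : YoungDiagram) : Prop :=
  ∃ c, IsCorner μ' c ∧ c ∉ μ.cells ∧ μ'.cells = insert c μ.cells

/-- `μ'` is obtained from `μ` by removing one corner of `μ`. -/
def RemoveCorner (μ μ' : YoungDiagram) : Prop :=
  ∃ c, IsCorner μ c ∧ μ'.cells = μ.cells.erase c

/-- `μ' ≠ μ` *differs from `μ` by the position of a corner*: it is obtained from `μ` by
removing a corner of `μ` and adding a new cell which is a corner of `μ'`. -/
def MoveCorner (μ μ' : YoungDiagram) : Prop :=
  μ' ≠ μ ∧ ∃ c c', IsCorner μ c ∧ IsCorner μ' c' ∧ c' ∉ μ.cells.erase c ∧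
    μ'.cells = insert c' (μ.cells.erase c)

/-- The one-row Young diagram `(n)`. -/
def rowDiagram (n : ℕ) : YoungDiagram :=
  YoungDiagram.ofRowLens [n] (List.pairwise_singleton _ n).sortedGE

/-- The Young diagram obtained by deleting the first (longest) row, i.e. the truncated
partition `λ̄ = (λ₂, …, λ_m)` of `λ = (λ₁, λ₂, …, λ_m)`. -/
def truncate (μ : YoungDiagram) : YoungDiagram where
  cells := (μ.cells.filter fun c => 1 ≤ c.1).image fun c => (c.1 - 1, c.2)
  isLowerSet := by
    rintro ⟨i1, j1⟩ ⟨i2, j2⟩ ⟨hi, hj⟩ h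
    simp only [Finset.coe_image, Finset.coe_filter, Set.mem_image, Set.mem_setOf_eq,
      Finset.mem_coe, YoungDiagram.mem_cells] at h ⊢
    obtain ⟨⟨a, b⟩, ⟨ha, ha1⟩, heq⟩ := h
    simp only [Prod.mk.injEq] at heq
    exact ⟨(i2 + 1, j2), ⟨μ.up_left_mem (by omega) (by omega) ha, by omega⟩, by simp⟩

/-- A *Kronecker tableau* of length `k`, initial shape `μ` and final shape `lam`:
a sequence `μ⁰ = μ, μ¹, …, μ^k = lam` of diagrams such that each `μ^{i+1}` either differs
from `μ^i` by the position of a corner, or equals `μ^i` together with the datum of a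
distinguished corner of `μ^{i+1}` other than its first corner. -/
structure KroneckerTableau (k : ℕ) (μ lam : YoungDiagram) where
  seq : Fin (k + 1) → YoungDiagram
  dist : Fin k → Option (ℕ × ℕ)
  init : seq 0 = μ
  final : seq (Fin.last k) = lam
  step : ∀ i : Fin k,
    (MoveCorner (seq i.castSucc) (seq i.succ) ∧ dist i = none) ∨
    (seq i.succ = seq i.castSucc ∧
      ∃ c, dist i = some c ∧ IsCorner (seq i.succ) c ∧ ¬ IsFirstCorner (seq i.succ) c)

/-- A *partial standard tableau* of shape `α` with labels in `{1, …, k}`: a labelling of the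
cells of `α` by pairwise distinct integers of `{1, …, k}` increasing along rows and columns
(cells outside `α` are labelled `0` by convention). -/
structure PartialST (α : YoungDiagram) (k : ℕ) where
  label : ℕ × ℕ → ℕ
  mem_of_cell : ∀ c ∈ α, label c ∈ Finset.Icc 1 k
  zero_of_not_cell : ∀ c, c ∉ α → label c = 0
  injOn : ∀ c ∈ α, ∀ c' ∈ α, label c = label c' → c = c'
  row_incr : ∀ i j1 j2 : ℕ, j1 < j2 → (i, j2) ∈ α → label (i, j1) < label (i, j2)
  col_incr : ∀ i1 i2 j : ℕ, i1 < i2 → (i2, j) ∈ α → label (i1, j) < label (i2, j)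

/-- `f^α`, the number of standard Young tableaux of shape `α`. -/
noncomputable def fSYT (α : YoungDiagram) : ℕ :=
  Nat.card (PartialST α α.card)

/-- `p₂ n k`: the number of partitions of an `n`-element set into exactly `k` blocks, each of
size at least `2` (associated Stirling numbers of the second kind). -/
noncomputable def p2 (n k : ℕ) : ℕ :=
  Nat.card {P : Finpartition (Finset.univ : Finset (Fin n)) //
    P.parts.card = k ∧ ∀ b ∈ P.parts, 2 ≤ b.card}

/-- Every non-trivial cycle of `π` is *decreasing*: `π x < x` for every element `x` of a
non-trivial cycle which is not the minimum of its cycle. -/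
def DecCycles {S : Type*} [LinearOrder S] (π : Equiv.Perm S) : Prop :=
  ∀ x, π x ≠ x → (∃ y, π.SameCycle x y ∧ y < x) → π x < x

/-- A pair `(T, π)` of a partial standard tableau of shape `α` with labels in `{1, …, k}`
and a permutation `π` of `{1, …, k}` all of whose non-trivial cycles are decreasing, such
that every fixed point of `π` is a label of `T` and every label of `T` is the greatest
element of its cycle in `π`. -/
structure TabPerm (k : ℕ) (α : YoungDiagram) where
  T : PartialST α k
  π : Equiv.Perm ℕ
  perm_of : ∀ x : ℕ, x ∉ Finset.Icc 1 k → π x = x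
  dec : DecCycles π
  fix_mem : ∀ x ∈ Finset.Icc 1 k, π x = x → ∃ c ∈ α, T.label c = x
  label_max : ∀ c ∈ α, ∀ y : ℕ, π.SameCycle (T.label c) y → y ≤ T.label c


/-- Substitution `f(g)` of a power series `g` with zero constant term into a power series
`f`: the coefficient of `Xⁿ` in `Σ_m (coeff m f) ⬝ g^m` (the sum is finite in each degree
since `g` has zero constant term, so `coeff n (g^m) = 0` for `m > n`). -/
noncomputable def psSubst {R S : Type*} [CommSemiring R] [CommSemiring S] [Algebra R S]
    (f : PowerSeries R) (g : PowerSeries S) : PowerSeries S :=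
  PowerSeries.mk fun n =>
    ∑ m ∈ Finset.range (n + 1),
      algebraMap R S (PowerSeries.coeff m f) * PowerSeries.coeff n (g ^ m)


/-- `β` is obtained from `γ` by adding one cell. -/
def Cov (γ β : YoungDiagram) : Prop := γ ≤ β ∧ β.card = γ.card + 1

theorem yd_ext {μ ν : YoungDiagram} (h : ∀ i j, (i, j) ∈ μ ↔ (i, j) ∈ ν) : μ = ν := by
  apply YoungDiagram.ext
  ext ⟨i, j⟩
  simpa using h i j

theorem le_def' {μ ν : YoungDiagram} : μ ≤ ν ↔ ∀ i j, (i, j) ∈ μ → (i, j) ∈ ν := by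
  rw [← YoungDiagram.cells_subset_iff]
  constructor
  · intro h i j hm
    exact (YoungDiagram.mem_cells _).1 (h ((YoungDiagram.mem_cells _).2 hm))
  · rintro h ⟨i, j⟩ hm
    exact (YoungDiagram.mem_cells _).2 (h i j ((YoungDiagram.mem_cells _).1 hm))

theorem eq_of_le_card {μ ν : YoungDiagram} (h : μ ≤ ν) (hc : ν.card ≤ μ.card) : μ = ν := by
  apply YoungDiagram.ext
  exact Finset.eq_of_subset_of_card_le (YoungDiagram.cells_subset_iff.2 h) hc

theorem card_mono' {μ ν : YoungDiagram} (h : μ ≤ ν) : μ.card ≤ ν.card :=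
  Finset.card_le_card (YoungDiagram.cells_subset_iff.2 h)

theorem card_inf_sup (μ ν : YoungDiagram) : (μ ⊓ ν).card + (μ ⊔ ν).card = μ.card + ν.card := by
  have := Finset.card_union_add_card_inter μ.cells ν.cells
  simp only [YoungDiagram.card, YoungDiagram.cells_inf, YoungDiagram.cells_sup]
  omega

theorem finite_card_le (N : ℕ) : {μ : YoungDiagram | μ.card ≤ N}.Finite := by
  have h1 : ((Finset.range N ×ˢ Finset.range N).powerset : Set (Finset (ℕ × ℕ))).Finite :=
    Finset.finite_toSet _
  refine (h1.preimage (f := YoungDiagram.cells) ?_).subset ?_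
  · intro a _ b _ h
    exact YoungDiagram.ext h
  · intro μ hμ
    simp only [Set.mem_preimage, Finset.mem_coe, Finset.mem_powerset]
    rintro ⟨i, j⟩ hij
    have hij' : (i, j) ∈ μ := (YoungDiagram.mem_cells _).1 hij
    have hi : i + 1 ≤ μ.card := by
      have : ((Finset.range (i+1)).image fun a => (a, j)) ⊆ μ.cells := by
        intro c hc
        simp only [Finset.mem_image, Finset.mem_range] at hc
        obtain ⟨a, ha, rfl⟩ := hc
        exact (YoungDiagram.mem_cells _).2 (μ.up_left_mem (by omega) le_rfl hij')
      have h2 := Finset.card_le_card this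
      rwa [Finset.card_image_of_injective _ (by intro a b h; simpa using h),
        Finset.card_range] at h2
    have hj : j + 1 ≤ μ.card := by
      have : ((Finset.range (j+1)).image fun a => (i, a)) ⊆ μ.cells := by
        intro c hc
        simp only [Finset.mem_image, Finset.mem_range] at hc
        obtain ⟨a, ha, rfl⟩ := hc
        exact (YoungDiagram.mem_cells _).2 (μ.up_left_mem le_rfl (by omega) hij')
      have h2 := Finset.card_le_card this
      rwa [Finset.card_image_of_injective _ (by intro a b h; simpa using h),
        Finset.card_range] at h2
    have : μ.card ≤ N := hμ
    simp only [Finset.mem_product, Finset.mem_range]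
    omega

theorem finite_down (β : YoungDiagram) : {γ | Cov γ β}.Finite :=
  (finite_card_le β.card).subset fun _ h => card_mono' h.1

theorem finite_up (β : YoungDiagram) : {γ | Cov β γ}.Finite :=
  (finite_card_le (β.card + 1)).subset fun _ h => h.2.le

/-- Diagrams covered by `β`. -/
noncomputable def down (β : YoungDiagram) : Finset YoungDiagram := (finite_down β).toFinset

/-- Diagrams covering `β`. -/
noncomputable def up (β : YoungDiagram) : Finset YoungDiagram := (finite_up β).toFinset

@[simp] theorem mem_down {γ β : YoungDiagram} : γ ∈ down β ↔ Cov γ β := by simp [down]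
@[simp] theorem mem_up {γ β : YoungDiagram} : γ ∈ up β ↔ Cov β γ := by simp [up]

/-- `γ ≠ β` obtained from `β` by moving a cell. -/
def Mv (β γ : YoungDiagram) : Prop := γ.card = β.card ∧ (β ⊓ γ).card + 1 = β.card

theorem finite_mv (β : YoungDiagram) : {γ | Mv β γ}.Finite :=
  (finite_card_le β.card).subset fun _ h => h.1.le

/-- Diagrams obtained from `β` by moving a cell. -/
noncomputable def mv (β : YoungDiagram) : Finset YoungDiagram := (finite_mv β).toFinset

@[simp] theorem mem_mv {γ β : YoungDiagram} : γ ∈ mv β ↔ Mv β γ := by simp [mv]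

theorem cov_cov_down {δ β γ : YoungDiagram} (h1 : Cov δ β) (h2 : Cov δ γ) (hne : γ ≠ β) :
    Mv β γ ∧ δ = β ⊓ γ := by
  have hle : δ ≤ β ⊓ γ := le_inf h1.1 h2.1
  have hc := card_mono' hle
  have hlt : (β ⊓ γ).card < β.card := by
    by_contra hcon
    push Not at hcon
    have e1 := eq_of_le_card inf_le_left hcon
    have e2 : β ≤ γ := by rw [← e1]; exact inf_le_right
    exact hne (eq_of_le_card e2 (by rw [h1.2, h2.2])).symm
  have a := h1.2
  have b := h2.2
  refine ⟨⟨by omega, by omega⟩, eq_of_le_card hle (by omega)⟩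

theorem cov_cov_up {ε β γ : YoungDiagram} (h1 : Cov β ε) (h2 : Cov γ ε) (hne : γ ≠ β) :
    Mv β γ ∧ ε = β ⊔ γ := by
  have hle : β ⊔ γ ≤ ε := sup_le h1.1 h2.1
  have hc := card_mono' hle
  have hs := card_inf_sup β γ
  have hlt : (β ⊓ γ).card < β.card := by
    by_contra hcon
    push Not at hcon
    have e1 := eq_of_le_card inf_le_left hcon
    have e2 : β ≤ γ := by rw [← e1]; exact inf_le_right
    exact hne (eq_of_le_card e2 (by have := h1.2; have := h2.2; omega)).symm
  have a := h1.2
  have b := h2.2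
  refine ⟨⟨by omega, by omega⟩, (eq_of_le_card hle (by omega)).symm⟩

theorem Mv.inf_cov {β γ : YoungDiagram} (h : Mv β γ) : Cov (β ⊓ γ) β ∧ Cov (β ⊓ γ) γ :=
  ⟨⟨inf_le_left, h.2.symm⟩, ⟨inf_le_right, by rw [h.1, h.2]⟩⟩

theorem Mv.sup_cov {β γ : YoungDiagram} (h : Mv β γ) : Cov β (β ⊔ γ) ∧ Cov γ (β ⊔ γ) := by
  have := card_inf_sup β γ
  have a := h.1
  have b := h.2
  exact ⟨⟨le_sup_left, by omega⟩, ⟨le_sup_right, by omega⟩⟩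

theorem Mv.ne {β γ : YoungDiagram} (h : Mv β γ) : γ ≠ β := by
  rintro rfl
  have := h.2
  simp at this

/-- Sum over down-up paths. -/
theorem sum_down_up (F : YoungDiagram → ℚ) (β : YoungDiagram) :
    ∑ δ ∈ down β, ∑ γ ∈ up δ, F γ = (down β).card * F β + ∑ γ ∈ mv β, F γ := by
  classical
  have h1 : ∀ δ ∈ down β, ∑ γ ∈ up δ, F γ = F β + ∑ γ ∈ (up δ).erase β, F γ := by
    intro δ hδ
    rw [Finset.add_sum_erase]
    simpa using hδ
  rw [Finset.sum_congr rfl h1, Finset.sum_add_distrib, Finset.sum_const, nsmul_eq_mul]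
  congr 1
  rw [Finset.sum_sigma']
  refine Finset.sum_bij' (fun x _ => x.2) (fun γ _ => ⟨β ⊓ γ, γ⟩) ?_ ?_ ?_ ?_ ?_
  · rintro ⟨δ, γ⟩ h
    simp only [Finset.mem_sigma, mem_down, Finset.mem_erase, mem_up] at h
    simpa using (cov_cov_down h.1 h.2.2 h.2.1).1
  · intro γ h
    simp only [mem_mv] at h
    simp only [Finset.mem_sigma, mem_down, Finset.mem_erase, mem_up]
    exact ⟨h.inf_cov.1, h.ne, h.inf_cov.2⟩
  · rintro ⟨δ, γ⟩ h
    simp only [Finset.mem_sigma, mem_down, Finset.mem_erase, mem_up] at h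
    have := (cov_cov_down h.1 h.2.2 h.2.1).2
    simp [this]
  · intro γ h
    rfl
  · intro _ _
    rfl

theorem sum_up_down (F : YoungDiagram → ℚ) (β : YoungDiagram) :
    ∑ δ ∈ up β, ∑ γ ∈ down δ, F γ = (up β).card * F β + ∑ γ ∈ mv β, F γ := by
  classical
  have h1 : ∀ δ ∈ up β, ∑ γ ∈ down δ, F γ = F β + ∑ γ ∈ (down δ).erase β, F γ := by
    intro δ hδ
    rw [Finset.add_sum_erase]
    simpa using hδ
  rw [Finset.sum_congr rfl h1, Finset.sum_add_distrib, Finset.sum_const, nsmul_eq_mul]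
  congr 1
  rw [Finset.sum_sigma']
  refine Finset.sum_bij' (fun x _ => x.2) (fun γ _ => ⟨β ⊔ γ, γ⟩) ?_ ?_ ?_ ?_ ?_
  · rintro ⟨δ, γ⟩ h
    simp only [Finset.mem_sigma, mem_down, Finset.mem_erase, mem_up] at h
    simpa using (cov_cov_up h.1 h.2.2 h.2.1).1
  · intro γ h
    simp only [mem_mv] at h
    simp only [Finset.mem_sigma, mem_down, Finset.mem_erase, mem_up]
    exact ⟨h.sup_cov.1, h.ne, h.sup_cov.2⟩
  · rintro ⟨δ, γ⟩ h
    simp only [Finset.mem_sigma, mem_down, Finset.mem_erase, mem_up] at h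
    have := (cov_cov_up h.1 h.2.2 h.2.1).2
    simp [this]
  · intro γ h
    rfl
  · intro _ _
    rfl

/-- Remove a corner. -/
def remCell (β : YoungDiagram) (c : ℕ × ℕ) (h : IsCorner β c) : YoungDiagram where
  cells := β.cells.erase c
  isLowerSet := by
    rintro ⟨i1, j1⟩ ⟨i2, j2⟩ ⟨hi, hj⟩ hm
    obtain ⟨a, b⟩ := c
    simp only [Finset.coe_erase, Set.mem_diff, Finset.mem_coe, YoungDiagram.mem_cells,
      Set.mem_singleton_iff] at hm ⊢
    simp only at hi hj
    refine ⟨β.up_left_mem hi hj hm.1, ?_⟩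
    intro he
    simp only [Prod.mk.injEq] at he
    obtain ⟨rfl, rfl⟩ := he
    obtain ⟨h1, h2, h3⟩ := h
    rcases Nat.eq_or_lt_of_le hi with e | e
    · rcases Nat.eq_or_lt_of_le hj with e' | e'
      · exact hm.2 (by simp [e, e'])
      · exact h3 (β.up_left_mem hi e' hm.1)
    · exact h2 (β.up_left_mem e hj hm.1)

theorem cov_remCell (β : YoungDiagram) (c : ℕ × ℕ) (h : IsCorner β c) : Cov (remCell β c h) β := by
  constructor
  · rw [← YoungDiagram.cells_subset_iff]
    exact Finset.erase_subset _ _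
  · have := Finset.card_erase_add_one (s := β.cells) (a := c) ((YoungDiagram.mem_cells _).2 h.1)
    exact this.symm

theorem Cov.exists_cell {γ β : YoungDiagram} (h : Cov γ β) :
    ∃ c, IsCorner β c ∧ c ∉ γ ∧ β.cells = insert c γ.cells := by
  have := Finset.exists_eq_insert_iff.2 ⟨YoungDiagram.cells_subset_iff.2 h.1, h.2.symm⟩
  obtain ⟨⟨i, j⟩, hc, he⟩ := this
  have hm : ∀ x, x ∈ β ↔ x = (i, j) ∨ x ∈ γ := by
    intro x
    rw [← YoungDiagram.mem_cells, ← he, Finset.mem_insert, YoungDiagram.mem_cells]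
  have hc' : (i, j) ∉ γ := fun h => hc ((YoungDiagram.mem_cells _).2 h)
  refine ⟨(i, j), ⟨(hm _).2 (Or.inl rfl), ?_, ?_⟩, hc', he.symm⟩
  · rw [hm]
    rintro (h | h)
    · simp at h
    · exact hc' (γ.up_left_mem (by simp) le_rfl h)
  · rw [hm]
    rintro (h | h)
    · simp at h
    · exact hc' (γ.up_left_mem le_rfl (by simp) h)

theorem card_corners_down (β : YoungDiagram) :
    Nat.card {c // IsCorner β c} = (down β).card := by
  rw [← Nat.card_eq_finsetCard]
  refine Nat.card_congr (Equiv.ofBijective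
    (fun c => ⟨remCell β c.1 c.2, mem_down.2 (cov_remCell β c.1 c.2)⟩) ⟨?_, ?_⟩)
  · rintro ⟨c, hc⟩ ⟨d, hd⟩ h
    simp only [Subtype.mk.injEq] at h ⊢
    have h' : β.cells.erase c = β.cells.erase d := congrArg YoungDiagram.cells h
    by_contra hne
    have : c ∈ β.cells.erase d := Finset.mem_erase.2 ⟨hne, (YoungDiagram.mem_cells _).2 hc.1⟩
    rw [← h'] at this
    simp at this
  · rintro ⟨γ, hγ⟩
    obtain ⟨c, h1, h2, h3⟩ := (mem_down.1 hγ).exists_cell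
    refine ⟨⟨c, h1⟩, ?_⟩
    simp only [Subtype.mk.injEq]
    apply YoungDiagram.ext
    change β.cells.erase c = _
    rw [h3, Finset.erase_insert]
    simpa using h2

/-- Descent rows. -/
def Desc (β : YoungDiagram) : Type := {i : ℕ // β.rowLen (i + 1) < β.rowLen i}

theorem isCorner_iff (β : YoungDiagram) (i j : ℕ) :
    IsCorner β (i, j) ↔ β.rowLen (i + 1) < β.rowLen i ∧ β.rowLen i = j + 1 := by
  simp only [IsCorner, YoungDiagram.mem_iff_lt_rowLen]
  have := β.rowLen_anti i (i + 1) (by omega)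
  omega

theorem card_corners_desc (β : YoungDiagram) :
    Nat.card {c // IsCorner β c} = Nat.card (Desc β) := by
  refine Nat.card_congr (Equiv.ofBijective
    (fun c => ⟨c.1.1, ((isCorner_iff β _ _).1 c.2).1⟩) ⟨?_, ?_⟩)
  · rintro ⟨⟨i, j⟩, hc⟩ ⟨⟨i', j'⟩, hd⟩ h
    have h' : i = i' := congrArg Subtype.val h
    subst h'
    rw [isCorner_iff] at hc hd
    simp only [Subtype.mk.injEq, Prod.mk.injEq, true_and]
    omega
  · rintro ⟨i, hi⟩
    exact ⟨⟨(i, β.rowLen i - 1), (isCorner_iff _ _ _).2 ⟨hi, by omega⟩⟩, rfl⟩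

/-- Add a cell at the end of row `i`. -/
def addRow (β : YoungDiagram) (i : ℕ) (h : i = 0 ∨ β.rowLen i < β.rowLen (i - 1)) :
    YoungDiagram where
  cells := insert (i, β.rowLen i) β.cells
  isLowerSet := by
    rintro ⟨i1, j1⟩ ⟨i2, j2⟩ ⟨hi, hj⟩ hm
    simp only [Finset.coe_insert, Finset.mem_coe, YoungDiagram.mem_cells, Set.mem_insert_iff,
      Prod.mk.injEq] at hm ⊢
    simp only at hi hj
    rcases hm with ⟨rfl, rfl⟩ | hm
    · by_cases e : i2 = i1
      · subst e
        by_cases e' : j2 = β.rowLen i2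
        · exact Or.inl ⟨rfl, e'⟩
        · right
          rw [YoungDiagram.mem_iff_lt_rowLen]
          omega
      · right
        rw [YoungDiagram.mem_iff_lt_rowLen]
        have := β.rowLen_anti i2 (i1 - 1) (by omega)
        omega
    · exact Or.inr (β.up_left_mem hi hj hm)

theorem cov_addRow (β : YoungDiagram) (i : ℕ) (h : i = 0 ∨ β.rowLen i < β.rowLen (i - 1)) :
    Cov β (addRow β i h) := by
  constructor
  · rw [← YoungDiagram.cells_subset_iff]
    exact Finset.subset_insert _ _
  · change (insert (i, β.rowLen i) β.cells).card = _
    rw [Finset.card_insert_of_notMem]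
    simp [YoungDiagram.mem_iff_lt_rowLen]

theorem addRow_inj {β : YoungDiagram} {i i' : ℕ} {h h'} (he : addRow β i h = addRow β i' h') :
    i = i' := by
  have h1 : insert (i, β.rowLen i) β.cells = insert (i', β.rowLen i') β.cells :=
    congrArg YoungDiagram.cells he
  have h2 : (i, β.rowLen i) ∈ insert (i', β.rowLen i') β.cells := by
    rw [← h1]; exact Finset.mem_insert_self _ _
  simp only [Finset.mem_insert, Prod.mk.injEq, YoungDiagram.mem_cells,
    YoungDiagram.mem_iff_lt_rowLen, lt_irrefl, or_false] at h2
  exact h2.1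

theorem Cov.exists_addRow {β γ : YoungDiagram} (h : Cov β γ) : ∃ i h, γ = addRow β i h := by
  obtain ⟨⟨i, j⟩, h1, h2, h3⟩ := h.exists_cell
  have hm : ∀ x, x ∈ γ ↔ x = (i, j) ∨ x ∈ β := by
    intro x
    rw [← YoungDiagram.mem_cells, h3, Finset.mem_insert, YoungDiagram.mem_cells]
  have hj : j = β.rowLen i := by
    rw [YoungDiagram.mem_iff_lt_rowLen] at h2
    by_contra hne
    have : (i, β.rowLen i) ∈ γ := γ.up_left_mem le_rfl (by omega) h1.1
    rw [hm] at this
    simp only [Prod.mk.injEq, true_and, YoungDiagram.mem_iff_lt_rowLen] at this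
    omega
  have hi : i = 0 ∨ β.rowLen i < β.rowLen (i - 1) := by
    by_contra hcon
    push Not at hcon
    have : (i - 1, j) ∈ γ := γ.up_left_mem (by omega) le_rfl h1.1
    rw [hm] at this
    simp only [Prod.mk.injEq, YoungDiagram.mem_iff_lt_rowLen] at this
    omega
  refine ⟨i, hi, ?_⟩
  apply YoungDiagram.ext
  rw [h3, hj]
  rfl

theorem card_up_desc (β : YoungDiagram) : (up β).card = Nat.card (Option (Desc β)) := by
  rw [← Nat.card_eq_finsetCard]
  symm
  refine Nat.card_congr (Equiv.ofBijective
    (fun o => match o with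
      | none => ⟨addRow β 0 (Or.inl rfl), mem_up.2 (cov_addRow _ _ _)⟩
      | some i => ⟨addRow β (i.1 + 1) (Or.inr i.2), mem_up.2 (cov_addRow _ _ _)⟩) ⟨?_, ?_⟩)
  · rintro (_ | ⟨i, hi⟩) (_ | ⟨i', hi'⟩) h
    · rfl
    · have := addRow_inj (Subtype.mk.inj h)
      simp at this
    · have := addRow_inj (Subtype.mk.inj h)
      simp at this
    · have := addRow_inj (Subtype.mk.inj h)
      simp only [add_left_inj] at this
      subst this
      rfl
  · rintro ⟨γ, hγ⟩
    obtain ⟨i, h, rfl⟩ := (mem_up.1 hγ).exists_addRow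
    rcases i with _ | i
    · exact ⟨none, rfl⟩
    · exact ⟨some ⟨i, by simpa using h⟩, rfl⟩

theorem card_up (β : YoungDiagram) : (up β).card = (down β).card + 1 := by
  have h := card_up_desc β
  have hfin : Finite (Desc β) := by
    have : Finite (Option (Desc β)) := by
      apply Nat.finite_of_card_ne_zero
      rw [← h]
      have : addRow β 0 (Or.inl rfl) ∈ up β := mem_up.2 (cov_addRow _ _ _)
      exact Finset.card_ne_zero_of_mem this
    exact Finite.of_injective (some : Desc β → Option (Desc β)) (Option.some_injective _)
  rw [h, Finite.card_option, ← card_corners_desc, card_corners_down]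


theorem partialST_ext {α : YoungDiagram} {k : ℕ} {S T : PartialST α k}
    (h : ∀ c, S.label c = T.label c) : S = T := by
  cases S
  cases T
  congr
  funext c
  exact h c

theorem finite_partialST (α : YoungDiagram) (k : ℕ) : Finite (PartialST α k) := by
  refine Finite.of_injective (β := (α.cells → Fin (k + 1)))
    (fun T c => ⟨T.label c.1, ?_⟩) ?_
  · have := T.mem_of_cell c.1 ((YoungDiagram.mem_cells _).1 c.2)
    rw [Finset.mem_Icc] at this
    omega
  · intro S T h
    apply partialST_ext
    intro c
    by_cases hc : c ∈ α
    · have := congrFun h ⟨c, (YoungDiagram.mem_cells _).2 hc⟩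
      simpa using this
    · rw [S.zero_of_not_cell c hc, T.zero_of_not_cell c hc]

theorem fSYT_bot : fSYT ⊥ = 1 := by
  unfold fSYT
  rw [Nat.card_eq_one_iff_unique]
  constructor
  · constructor
    intro S T
    apply partialST_ext
    intro c
    rw [S.zero_of_not_cell c (by simp), T.zero_of_not_cell c (by simp)]
  · exact ⟨{
      label := fun _ => 0
      mem_of_cell := by simp
      zero_of_not_cell := by simp
      injOn := by simp
      row_incr := by simp
      col_incr := by simp }⟩

/-- Extend a tableau by its largest entry. -/
def extST {γ β : YoungDiagram} {m : ℕ} (h : Cov γ β) (T : PartialST γ m) :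
    PartialST β (m + 1) where
  label c := if c ∈ γ then T.label c else if c ∈ β then m + 1 else 0
  mem_of_cell := by
    intro c hc
    rw [Finset.mem_Icc]
    by_cases h1 : c ∈ γ
    · have := T.mem_of_cell c h1
      rw [Finset.mem_Icc] at this
      simp only [h1, if_true]
      omega
    · simp [h1, hc]
  zero_of_not_cell := by
    intro c hc
    have : c ∉ γ := fun h' => hc (h.1 h')
    simp [this, hc]
  injOn := by
    intro c hc d hd he
    obtain ⟨x, hx1, hx2, hx3⟩ := h.exists_cell
    have hm : ∀ y, y ∈ β ↔ y = x ∨ y ∈ γ := by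
      intro y
      rw [← YoungDiagram.mem_cells, hx3, Finset.mem_insert, YoungDiagram.mem_cells]
    by_cases h1 : c ∈ γ <;> by_cases h2 : d ∈ γ
    · simp only [h1, h2, if_true] at he
      exact T.injOn c h1 d h2 he
    · have := T.mem_of_cell c h1
      rw [Finset.mem_Icc] at this
      simp only [h1, h2, hd, if_true, if_false] at he
      omega
    · have := T.mem_of_cell d h2
      rw [Finset.mem_Icc] at this
      simp only [h1, h2, hc, if_true, if_false] at he
      omega
    · rw [hm] at hc hd
      rw [hc.resolve_right h1, hd.resolve_right h2]
  row_incr := by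
    intro i j1 j2 hj hm
    by_cases h2 : (i, j2) ∈ γ
    · have h1 : (i, j1) ∈ γ := γ.up_left_mem le_rfl hj.le h2
      simp only [h1, h2, if_true]
      exact T.row_incr i j1 j2 hj h2
    · have h1 : (i, j1) ∈ γ := by
        obtain ⟨x, hx1, hx2, hx3⟩ := h.exists_cell
        have hm' : ∀ y, y ∈ β ↔ y = x ∨ y ∈ γ := by
          intro y
          rw [← YoungDiagram.mem_cells, hx3, Finset.mem_insert, YoungDiagram.mem_cells]
        have e := ((hm' _).1 hm).resolve_right h2
        refine ((hm' (i, j1)).1 (β.up_left_mem le_rfl hj.le hm)).resolve_left ?_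
        rw [← e]
        simp only [Prod.mk.injEq, true_and]
        omega
      have := T.mem_of_cell _ h1
      rw [Finset.mem_Icc] at this
      simp only [h1, h2, hm, if_true, if_false]
      omega
  col_incr := by
    intro i1 i2 j hj hm
    by_cases h2 : (i2, j) ∈ γ
    · have h1 : (i1, j) ∈ γ := γ.up_left_mem hj.le le_rfl h2
      simp only [h1, h2, if_true]
      exact T.col_incr i1 i2 j hj h2
    · have h1 : (i1, j) ∈ γ := by
        obtain ⟨x, hx1, hx2, hx3⟩ := h.exists_cell
        have hm' : ∀ y, y ∈ β ↔ y = x ∨ y ∈ γ := by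
          intro y
          rw [← YoungDiagram.mem_cells, hx3, Finset.mem_insert, YoungDiagram.mem_cells]
        have e := ((hm' _).1 hm).resolve_right h2
        refine ((hm' (i1, j)).1 (β.up_left_mem hj.le le_rfl hm)).resolve_left ?_
        rw [← e]
        simp only [Prod.mk.injEq, and_true]
        omega
      have := T.mem_of_cell _ h1
      rw [Finset.mem_Icc] at this
      simp only [h1, h2, hm, if_true, if_false]
      omega

theorem extST_mem_iff {γ β : YoungDiagram} {m : ℕ} (h : Cov γ β) (T : PartialST γ m)
    (c : ℕ × ℕ) : c ∈ γ ↔ c ∈ β ∧ (extST h T).label c ≤ m := by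
  constructor
  · intro hc
    refine ⟨h.1 hc, ?_⟩
    have := T.mem_of_cell c hc
    rw [Finset.mem_Icc] at this
    simp only [extST, hc, if_true]
    omega
  · rintro ⟨h1, h2⟩
    by_contra h3
    simp only [extST, h1, h3, if_true, if_false] at h2
    omega

theorem card_partialST_succ {β : YoungDiagram} {m : ℕ} (hβ : β.card = m + 1) :
    Nat.card (PartialST β (m + 1)) =
      Nat.card (Σ γ : {γ // γ ∈ down β}, PartialST γ.1 m) := by
  symm
  refine Nat.card_congr (Equiv.ofBijective
    (fun x => extST (mem_down.1 x.1.2) x.2) ⟨?_, ?_⟩)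
  · rintro ⟨⟨γ, hγ⟩, S⟩ ⟨⟨γ', hγ'⟩, T⟩ h
    simp only at h
    have e : γ = γ' := by
      apply yd_ext
      intro i j
      rw [extST_mem_iff (mem_down.1 hγ) S, extST_mem_iff (mem_down.1 hγ') T, h]
    subst e
    have : S = T := by
      apply partialST_ext
      intro c
      by_cases hc : c ∈ γ
      · have h' := congrArg (fun X => PartialST.label X c) h
        simpa [extST, hc] using h'
      · rw [S.zero_of_not_cell c hc, T.zero_of_not_cell c hc]
    subst this
    rfl
  · intro T
    have hsurj : ∃ c ∈ β, T.label c = m + 1 := by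
      have himg : β.cells.image T.label = Finset.Icc 1 (m + 1) := by
        apply Finset.eq_of_subset_of_card_le
        · intro x hx
          obtain ⟨c, hc, rfl⟩ := Finset.mem_image.1 hx
          exact T.mem_of_cell c ((YoungDiagram.mem_cells _).1 hc)
        · rw [Finset.card_image_of_injOn]
          · simp only [Nat.card_Icc, Nat.add_sub_cancel]
            exact hβ.ge
          · intro c hc d hd he
            exact T.injOn c ((YoungDiagram.mem_cells _).1 hc) d
              ((YoungDiagram.mem_cells _).1 hd) he
      have : m + 1 ∈ β.cells.image T.label := by rw [himg]; simp
      obtain ⟨c, hc, he⟩ := Finset.mem_image.1 this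
      exact ⟨c, (YoungDiagram.mem_cells _).1 hc, he⟩
    obtain ⟨⟨i, j⟩, hc, he⟩ := hsurj
    have hcor : IsCorner β (i, j) := by
      refine ⟨hc, ?_, ?_⟩
      · intro h
        have h1 := T.col_incr i (i + 1) j (by omega) h
        have h2 := T.mem_of_cell _ h
        rw [Finset.mem_Icc] at h2
        simp only at h2
        omega
      · intro h
        have h1 := T.row_incr i j (j + 1) (by omega) h
        have h2 := T.mem_of_cell _ h
        rw [Finset.mem_Icc] at h2
        simp only at h2
        omega
    have hcov := cov_remCell β (i, j) hcor
    have hmem : ∀ x, x ∈ remCell β (i, j) hcor ↔ x ≠ (i, j) ∧ x ∈ β := by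
      intro x
      rw [← YoungDiagram.mem_cells]
      change x ∈ β.cells.erase (i, j) ↔ _
      rw [Finset.mem_erase, YoungDiagram.mem_cells]
    let S : PartialST (remCell β (i, j) hcor) m := {
      label := fun c => if c ∈ remCell β (i, j) hcor then T.label c else 0
      mem_of_cell := by
        intro c hc'
        have h1 := (hmem c).1 hc'
        have h2 := T.mem_of_cell c h1.2
        have h3 : T.label c ≠ m + 1 := by
          intro h3
          exact h1.1 (T.injOn c h1.2 (i, j) hc (h3.trans he.symm))
        rw [Finset.mem_Icc] at h2 ⊢
        simp only [hc', if_true]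
        omega
      zero_of_not_cell := by
        intro c hc'
        simp [hc']
      injOn := by
        intro c hc' d hd h
        simp only [hc', hd, if_true] at h
        exact T.injOn c ((hmem c).1 hc').2 d ((hmem d).1 hd).2 h
      row_incr := by
        intro a j1 j2 hj h2
        have h1 := (remCell β (i, j) hcor).up_left_mem (le_refl a) hj.le h2
        simp only [h1, h2, if_true]
        exact T.row_incr a j1 j2 hj ((hmem _).1 h2).2
      col_incr := by
        intro a b j1 hj h2
        have h1 := (remCell β (i, j) hcor).up_left_mem hj.le (le_refl j1) h2
        simp only [h1, h2, if_true]
        exact T.col_incr a b j1 hj ((hmem _).1 h2).2 }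
    refine ⟨⟨⟨_, mem_down.2 hcov⟩, S⟩, ?_⟩
    apply partialST_ext
    intro c
    by_cases h1 : c ∈ remCell β (i, j) hcor
    · simp [extST, S, h1]
    · by_cases h2 : c ∈ β
      · have h3 : c = (i, j) := by
          by_contra h3
          exact h1 ((hmem c).2 ⟨h3, h2⟩)
        simp only [extST, h1, h2, if_true, if_false]
        rw [h3, he]
      · simp only [extST, h1, h2, if_false]
        rw [T.zero_of_not_cell c h2]

theorem fSYT_eq_sum_down {β : YoungDiagram} (hβ : 0 < β.card) :
    (fSYT β : ℚ) = ∑ γ ∈ down β, (fSYT γ : ℚ) := by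
  obtain ⟨m, hm⟩ := Nat.exists_eq_succ_of_ne_zero hβ.ne'
  have key : fSYT β = ∑ γ ∈ down β, fSYT γ := by
    have := fun γ => finite_partialST γ m
    unfold fSYT
    rw [hm, card_partialST_succ hm, Nat.card_sigma, ← Finset.sum_coe_sort (down β)]
    apply Finset.sum_congr rfl
    rintro ⟨γ, hγ⟩ _
    have := (mem_down.1 hγ).2
    have h2 : γ.card = m := by omega
    simp only [h2]
  rw [key]
  push_cast
  rfl

theorem down_eq_empty {β : YoungDiagram} (hβ : β.card = 0) : down β = ∅ := by
  apply Finset.eq_empty_of_forall_notMem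
  intro γ hγ
  have := (mem_down.1 hγ).2
  omega

theorem sum_up_fSYT (n : ℕ) : ∀ β : YoungDiagram, β.card = n →
    ∑ γ ∈ up β, (fSYT γ : ℚ) = (n + 1) * fSYT β := by
  induction n with
  | zero =>
    intro β hβ
    have h1 : ∀ δ ∈ up β, (fSYT δ : ℚ) = ∑ γ ∈ down δ, (fSYT γ : ℚ) := by
      intro δ hδ
      exact fSYT_eq_sum_down (by have := (mem_up.1 hδ).2; omega)
    rw [Finset.sum_congr rfl h1, sum_up_down, card_up]
    have h2 := sum_down_up (fun γ => (fSYT γ : ℚ)) β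
    rw [down_eq_empty hβ] at h2 ⊢
    simp only [Finset.sum_empty, Finset.card_empty, Nat.cast_zero, zero_mul, zero_add] at h2
    rw [← h2]
    simp
  | succ n ih =>
    intro β hβ
    have h1 : ∀ δ ∈ up β, (fSYT δ : ℚ) = ∑ γ ∈ down δ, (fSYT γ : ℚ) := by
      intro δ hδ
      exact fSYT_eq_sum_down (by have := (mem_up.1 hδ).2; omega)
    rw [Finset.sum_congr rfl h1, sum_up_down, card_up]
    have h2 := sum_down_up (fun γ => (fSYT γ : ℚ)) β
    have h3 : ∀ δ ∈ down β, ∑ γ ∈ up δ, (fSYT γ : ℚ) = (n + 1) * fSYT δ := by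
      intro δ hδ
      exact ih δ (by have := (mem_down.1 hδ).2; omega)
    rw [Finset.sum_congr rfl h3, ← Finset.mul_sum, ← fSYT_eq_sum_down (by omega)] at h2
    push_cast
    linarith

theorem sum_mv_fSYT (β : YoungDiagram) :
    (down β).card * (fSYT β : ℚ) + ∑ γ ∈ mv β, (fSYT γ : ℚ) = β.card * fSYT β := by
  have h1 : ∀ δ ∈ up β, (fSYT δ : ℚ) = ∑ γ ∈ down δ, (fSYT γ : ℚ) := by
    intro δ hδ
    exact fSYT_eq_sum_down (by have := (mem_up.1 hδ).2; omega)
  have h2 := sum_up_fSYT β.card β rfl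
  rw [Finset.sum_congr rfl h1, sum_up_down, card_up] at h2
  push_cast at h2
  linarith


/-- `exp(exp x - x - 1)`. -/
noncomputable def EE : PowerSeries ℚ :=
  psSubst (PowerSeries.exp ℚ) (PowerSeries.exp ℚ - PowerSeries.X - 1)

theorem coeff_pow_zero_of_lt {g : PowerSeries ℚ} (hg : PowerSeries.constantCoeff g = 0)
    {n m : ℕ} (h : n < m) : PowerSeries.coeff n (g ^ m) = 0 := by
  have h1 : (PowerSeries.X : PowerSeries ℚ) ∣ g := PowerSeries.X_dvd_iff.2 hg
  exact PowerSeries.X_pow_dvd_iff.1 (pow_dvd_pow_of_dvd h1 m) n h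

theorem deriv_psSubst_exp {g : PowerSeries ℚ} (hg : PowerSeries.constantCoeff g = 0) :
    PowerSeries.derivative ℚ (psSubst (PowerSeries.exp ℚ) g) =
      psSubst (PowerSeries.exp ℚ) g * PowerSeries.derivative ℚ g := by
  ext n
  rw [PowerSeries.coeff_derivative, PowerSeries.coeff_mul]
  have hc : ∀ i ≤ n, PowerSeries.coeff i (psSubst (PowerSeries.exp ℚ) g) =
      ∑ m ∈ Finset.range (n + 1), (1 / (m.factorial : ℚ)) * PowerSeries.coeff i (g ^ m) := by
    intro i hi
    simp only [psSubst, PowerSeries.coeff_mk, PowerSeries.coeff_exp]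
    apply Finset.sum_subset
    · intro x hx
      simp only [Finset.mem_range] at hx ⊢
      omega
    · intro x _ hx
      simp only [Finset.mem_range] at hx
      rw [coeff_pow_zero_of_lt hg (by omega), mul_zero]
  have h2 : ∑ p ∈ Finset.HasAntidiagonal.antidiagonal n, PowerSeries.coeff p.1 (psSubst (PowerSeries.exp ℚ) g) *
        PowerSeries.coeff p.2 (PowerSeries.derivative ℚ g) =
      ∑ m ∈ Finset.range (n + 1), (1 / (m.factorial : ℚ)) *
        PowerSeries.coeff n (g ^ m * PowerSeries.derivative ℚ g) := by
    have : ∀ p ∈ Finset.HasAntidiagonal.antidiagonal n,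
        PowerSeries.coeff p.1 (psSubst (PowerSeries.exp ℚ) g) *
        PowerSeries.coeff p.2 (PowerSeries.derivative ℚ g) =
        ∑ m ∈ Finset.range (n + 1), (1 / (m.factorial : ℚ)) * (PowerSeries.coeff p.1 (g ^ m) *
          PowerSeries.coeff p.2 (PowerSeries.derivative ℚ g)) := by
      intro p hp
      rw [Finset.HasAntidiagonal.mem_antidiagonal] at hp
      rw [hc p.1 (by omega), Finset.sum_mul]
      apply Finset.sum_congr rfl
      intro m _
      ring
    rw [Finset.sum_congr rfl this, Finset.sum_comm]
    apply Finset.sum_congr rfl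
    intro m _
    rw [PowerSeries.coeff_mul, Finset.mul_sum]
  rw [h2]
  simp only [psSubst, PowerSeries.coeff_mk, PowerSeries.coeff_exp]
  rw [Finset.sum_range_succ', add_mul, Finset.sum_mul]
  have h0 : (PowerSeries.coeff (n + 1)) (g ^ 0) = 0 := by
    rw [pow_zero, PowerSeries.coeff_one]
    simp
  rw [h0, mul_zero, zero_mul, add_zero]
  apply Finset.sum_congr rfl
  intro m _
  have h3 := PowerSeries.coeff_derivative (R := ℚ) (g ^ (m + 1)) n
  rw [PowerSeries.derivative_pow] at h3
  have h4 : ((m + 1 : ℕ) : PowerSeries ℚ) * g ^ (m + 1 - 1) * PowerSeries.derivative ℚ g =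
      ((m + 1 : ℕ) : ℚ) • (g ^ m * PowerSeries.derivative ℚ g) := by
    rw [Nat.add_sub_cancel, PowerSeries.smul_eq_C_mul, map_natCast]
    ring
  rw [h4, map_smul, smul_eq_mul] at h3
  simp only [eq_ratCast, Rat.cast_eq_id, id]
  rw [mul_assoc, ← h3, Nat.factorial_succ]
  have : (m.factorial : ℚ) ≠ 0 := by positivity
  have : ((m + 1 : ℕ) : ℚ) ≠ 0 := by positivity
  push_cast at *
  field_simp

/-- `exp(exp x - x - 1) (exp x - 1)^ℓ`. -/
noncomputable def HH (l : ℕ) : PowerSeries ℚ := EE * (PowerSeries.exp ℚ - 1) ^ l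

theorem deriv_EE : PowerSeries.derivative ℚ EE = EE * (PowerSeries.exp ℚ - 1) := by
  unfold EE
  rw [deriv_psSubst_exp (by simp)]
  congr 1
  simp [PowerSeries.derivative_exp]

theorem deriv_HH_zero : PowerSeries.derivative ℚ (HH 0) = HH 1 := by
  simp [HH, deriv_EE]

theorem deriv_HH_succ (l : ℕ) : PowerSeries.derivative ℚ (HH (l + 1)) =
    HH (l + 2) + ((l + 1 : ℕ) : ℚ) • HH (l + 1) + ((l + 1 : ℕ) : ℚ) • HH l := by
  unfold HH
  rw [Derivation.leibniz, PowerSeries.derivative_pow, deriv_EE, map_sub,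
    PowerSeries.derivative_exp, PowerSeries.smul_eq_C_mul, PowerSeries.smul_eq_C_mul, map_natCast]
  simp only [smul_eq_mul, Nat.add_sub_cancel, PowerSeries.derivative_one, sub_zero]
  ring

/-- The counting sequence, up to `f^α`. -/
noncomputable def gg (k l : ℕ) : ℚ := k.factorial * PowerSeries.coeff k (HH l) / l.factorial

theorem gg_zero_of_lt {k l : ℕ} (h : k < l) : gg k l = 0 := by
  have h1 : (PowerSeries.X : PowerSeries ℚ) ∣ (PowerSeries.exp ℚ - 1) :=
    PowerSeries.X_dvd_iff.2 (by simp)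
  have h2 : (PowerSeries.X : PowerSeries ℚ) ^ l ∣ HH l :=
    Dvd.dvd.mul_left (pow_dvd_pow_of_dvd h1 l) _
  have := PowerSeries.X_pow_dvd_iff.1 h2 k h
  simp [gg, this]

theorem gg_zero_zero : gg 0 0 = 1 := by
  simp [gg, HH, EE, psSubst]

theorem gg_succ_zero (k : ℕ) : gg (k + 1) 0 = gg k 1 := by
  have h := congrArg (PowerSeries.coeff k) deriv_HH_zero
  rw [PowerSeries.coeff_derivative] at h
  simp only [gg, ← h, Nat.factorial_succ]
  push_cast
  simp
  ring

theorem gg_succ_succ (k l : ℕ) :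
    gg (k + 1) (l + 1) = gg k l + (l + 2) * gg k (l + 2) + (l + 1) * gg k (l + 1) := by
  have h := congrArg (PowerSeries.coeff k) (deriv_HH_succ l)
  rw [PowerSeries.coeff_derivative, map_add, map_add, map_smul, map_smul] at h
  simp only [smul_eq_mul] at h
  have hk : gg (k + 1) (l + 1) = k.factorial * (PowerSeries.coeff (k + 1) (HH (l + 1)) * (k + 1)) /
      (l + 1).factorial := by
    simp only [gg, Nat.factorial_succ k]
    push_cast
    ring
  rw [hk, h]
  have : (l.factorial : ℚ) ≠ 0 := by positivity
  have : (l + 1 : ℚ) ≠ 0 := by positivity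
  have : (l + 2 : ℚ) ≠ 0 := by positivity
  have : (l + 1 + 1 : ℚ) ≠ 0 := by positivity
  simp only [gg, Nat.factorial_succ]
  push_cast
  field_simp
  ring


theorem mem_truncate {μ : YoungDiagram} {i j : ℕ} : (i, j) ∈ truncate μ ↔ (i + 1, j) ∈ μ := by
  rw [← YoungDiagram.mem_cells]
  simp only [truncate, Finset.mem_image, Finset.mem_filter, YoungDiagram.mem_cells,
    Prod.mk.injEq, Prod.exists]
  constructor
  · rintro ⟨a, b, ⟨h1, h2⟩, h3, rfl⟩
    have : a = i + 1 := by omega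
    rwa [← this]
  · intro h
    exact ⟨i + 1, j, ⟨h, by omega⟩, by omega, rfl⟩

theorem rowLen_eq_of {μ ν : YoungDiagram} {i i' : ℕ} (h : ∀ j, (i, j) ∈ μ ↔ (i', j) ∈ ν) :
    μ.rowLen i = ν.rowLen i' := by
  simp only [YoungDiagram.mem_iff_lt_rowLen] at h
  have h1 := h (μ.rowLen i)
  have h2 := h (ν.rowLen i')
  omega

theorem rowLen_truncate (μ : YoungDiagram) (i : ℕ) : (truncate μ).rowLen i = μ.rowLen (i + 1) :=
  rowLen_eq_of fun _ => mem_truncate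

theorem card_truncate (μ : YoungDiagram) : μ.card = μ.rowLen 0 + (truncate μ).card := by
  have h1 : (truncate μ).card = (μ.cells.filter fun c => 1 ≤ c.1).card := by
    change ((μ.cells.filter fun c => 1 ≤ c.1).image fun c => (c.1 - 1, c.2)).card = _
    apply Finset.card_image_of_injOn
    rintro ⟨a, b⟩ h ⟨c, d⟩ h' he
    simp only [Finset.coe_filter, Set.mem_ofPred_eq] at h h'
    simp only [Prod.mk.injEq] at he ⊢
    omega
  have h2 : μ.rowLen 0 = (μ.cells.filter fun c => ¬ 1 ≤ c.1).card := by
    rw [YoungDiagram.rowLen_eq_card, YoungDiagram.row]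
    congr 1
    apply Finset.filter_congr
    intro x _
    omega
  rw [h1, h2, add_comm]
  exact (Finset.card_filter_add_card_filter_not _).symm

theorem truncate_inf (μ ν : YoungDiagram) : truncate (μ ⊓ ν) = truncate μ ⊓ truncate ν := by
  apply yd_ext
  intro i j
  simp only [mem_truncate, YoungDiagram.mem_inf]

theorem rowLen_inf (μ ν : YoungDiagram) (i : ℕ) :
    (μ ⊓ ν).rowLen i = min (μ.rowLen i) (ν.rowLen i) := by
  have h : ∀ j, (i, j) ∈ μ ⊓ ν ↔ (i, j) ∈ μ ∧ (i, j) ∈ ν := fun j => YoungDiagram.mem_inf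
  simp only [YoungDiagram.mem_iff_lt_rowLen] at h
  have h1 := h ((μ ⊓ ν).rowLen i)
  have h2 := h (min (μ.rowLen i) (ν.rowLen i))
  omega

theorem truncate_inj {μ ν : YoungDiagram} (h : truncate μ = truncate ν) (hc : μ.card = ν.card) :
    μ = ν := by
  apply yd_ext
  intro i j
  rcases i with _ | i
  · have h1 := card_truncate μ
    have h2 := card_truncate ν
    rw [h] at h1
    rw [YoungDiagram.mem_iff_lt_rowLen, YoungDiagram.mem_iff_lt_rowLen]
    omega
  · rw [← mem_truncate, ← mem_truncate, h]

theorem exists_truncate {β : YoungDiagram} {n : ℕ} (h : β.card + β.rowLen 0 ≤ n) :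
    ∃ μ, truncate μ = β ∧ μ.card = n := by
  let μ : YoungDiagram := {
    cells := ((Finset.range (n - β.card)).image fun j => (0, j)) ∪
      (β.cells.image fun c => (c.1 + 1, c.2))
    isLowerSet := by
      rintro ⟨i1, j1⟩ ⟨i2, j2⟩ ⟨hi, hj⟩ hm
      simp only [Finset.coe_union, Finset.coe_image, Set.mem_union, Set.mem_image,
        Finset.mem_coe, Finset.mem_range, YoungDiagram.mem_cells, Prod.mk.injEq, Prod.exists]
        at hm ⊢
      simp only at hi hj
      rcases hm with ⟨x, hx, rfl, rfl⟩ | ⟨a, b, hab, rfl, rfl⟩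
      · left
        exact ⟨j2, by omega, by omega, rfl⟩
      · rcases i2 with _ | i2
        · left
          have h0 : (0, b) ∈ β := β.up_left_mem (by omega) le_rfl hab
          rw [YoungDiagram.mem_iff_lt_rowLen] at h0
          exact ⟨j2, by omega, rfl, rfl⟩
        · right
          exact ⟨i2, j2, β.up_left_mem (by omega) hj hab, rfl, rfl⟩ }
  have hmem : ∀ i j, (i, j) ∈ μ ↔ (i = 0 ∧ j < n - β.card) ∨ (1 ≤ i ∧ (i - 1, j) ∈ β) := by
    intro i j
    rw [← YoungDiagram.mem_cells]
    simp only [μ, Finset.mem_union, Finset.mem_image, Finset.mem_range, YoungDiagram.mem_cells,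
      Prod.mk.injEq, Prod.exists]
    constructor
    · rintro (⟨x, hx, rfl, rfl⟩ | ⟨a, b, hab, rfl, rfl⟩)
      · exact Or.inl ⟨rfl, hx⟩
      · exact Or.inr ⟨by omega, by simpa using hab⟩
    · rintro (⟨rfl, h⟩ | ⟨h1, h2⟩)
      · exact Or.inl ⟨j, h, rfl, rfl⟩
      · exact Or.inr ⟨i - 1, j, h2, by omega, rfl⟩
  have ht : truncate μ = β := by
    apply yd_ext
    intro i j
    rw [mem_truncate, hmem]
    simp
  refine ⟨μ, ht, ?_⟩
  rw [card_truncate, ht]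
  have h0 : ∀ j, (0, j) ∈ μ ↔ j < n - β.card := by
    intro j
    rw [hmem]
    simp
  simp only [YoungDiagram.mem_iff_lt_rowLen] at h0
  have h1 := h0 (μ.rowLen 0)
  have h2 := h0 (n - β.card)
  omega

theorem moveCorner_iff (μ ν : YoungDiagram) : MoveCorner μ ν ↔ Mv μ ν := by
  constructor
  · rintro ⟨hne, c, c', h1, h2, h3, h4⟩
    have k1 := cov_remCell μ c h1
    have k2 : Cov (remCell μ c h1) ν := by
      constructor
      · rw [← YoungDiagram.cells_subset_iff, h4]
        exact Finset.subset_insert _ _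
      · change ν.cells.card = (μ.cells.erase c).card + 1
        rw [h4, Finset.card_insert_of_notMem h3]
    exact (cov_cov_down k1 k2 hne).1
  · intro h
    refine ⟨h.ne, ?_⟩
    obtain ⟨c, a1, a2, a3⟩ := h.inf_cov.1.exists_cell
    obtain ⟨c', b1, b2, b3⟩ := h.inf_cov.2.exists_cell
    have he : μ.cells.erase c = (μ ⊓ ν).cells := by
      rw [a3, Finset.erase_insert]
      simpa using a2
    refine ⟨c, c', a1, b1, ?_, ?_⟩
    · rw [he, YoungDiagram.mem_cells]
      exact b2
    · rw [he]
      exact b3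

theorem Mv.symm {μ ν : YoungDiagram} (h : Mv μ ν) : Mv ν μ :=
  ⟨h.1.symm, by rw [inf_comm, h.2, h.1]⟩

theorem mv_truncate_iff {μ ν : YoungDiagram} (hc : ν.card = μ.card) :
    Mv μ ν ↔ Cov (truncate ν) (truncate μ) ∨ Cov (truncate μ) (truncate ν) ∨
      Mv (truncate μ) (truncate ν) := by
  have h1 := card_truncate μ
  have h2 := card_truncate ν
  have h3 := card_truncate (μ ⊓ ν)
  rw [rowLen_inf, truncate_inf] at h3
  have h4 := card_mono' (inf_le_left : truncate μ ⊓ truncate ν ≤ truncate μ)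
  have h5 := card_mono' (inf_le_right : truncate μ ⊓ truncate ν ≤ truncate ν)
  have hle : ∀ a b : YoungDiagram, a ≤ b ↔ (a ⊓ b).card = a.card := by
    intro a b
    constructor
    · intro h
      rw [inf_eq_left.2 h]
    · intro h
      rw [← eq_of_le_card (inf_le_left : a ⊓ b ≤ a) h.ge]
      exact inf_le_right
  unfold Mv Cov
  rw [hle, hle, inf_comm (truncate ν)]
  omega

theorem Cov.rowLen_le {γ β : YoungDiagram} (h : Cov γ β) :
    γ.rowLen 0 ≤ β.rowLen 0 ∧ β.rowLen 0 ≤ γ.rowLen 0 + 1 := by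
  have h1 := le_def'.1 h.1 0 (β.rowLen 0)
  simp only [YoungDiagram.mem_iff_lt_rowLen] at h1
  obtain ⟨⟨i, j⟩, -, -, h3⟩ := h.exists_cell
  have hm : ∀ y, y ∈ β ↔ y = (i, j) ∨ y ∈ γ := by
    intro y
    rw [← YoungDiagram.mem_cells, h3, Finset.mem_insert, YoungDiagram.mem_cells]
  have k1 := hm (0, γ.rowLen 0)
  have k2 := hm (0, γ.rowLen 0 + 1)
  simp only [YoungDiagram.mem_iff_lt_rowLen, Prod.mk.injEq] at k1 k2
  omega

theorem Mv.rowLen_le {β γ : YoungDiagram} (h : Mv β γ) : γ.rowLen 0 ≤ β.rowLen 0 + 1 := by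
  have h1 := h.inf_cov.1.rowLen_le
  have h2 := h.inf_cov.2.rowLen_le
  omega

/-- One step of a Kronecker tableau. -/
def StepOK (ν lam : YoungDiagram) (d : Option (ℕ × ℕ)) : Prop :=
  (MoveCorner ν lam ∧ d = none) ∨
    (lam = ν ∧ ∃ c, d = some c ∧ IsCorner lam c ∧ ¬ IsFirstCorner lam c)

theorem StepOK.card_eq {ν lam : YoungDiagram} {d} (h : StepOK ν lam d) : ν.card = lam.card := by
  rcases h with ⟨h, -⟩ | ⟨h, -⟩
  · exact ((moveCorner_iff _ _).1 h).1.symm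
  · rw [h]

/-- Non-first corners. -/
def NF (lam : YoungDiagram) : Type := {c // IsCorner lam c ∧ ¬ IsFirstCorner lam c}

theorem finite_NF (lam : YoungDiagram) : Finite (NF lam) :=
  Finite.of_injective (β := lam.cells) (fun c => ⟨c.1, (YoungDiagram.mem_cells _).2 c.2.1.1⟩)
    (by
      intro a b h
      have h' : a.1 = b.1 := congrArg (fun x : lam.cells => x.1) h
      exact Subtype.ext h')

theorem finite_step (ν lam : YoungDiagram) : Finite {d // StepOK ν lam d} := by
  have hfin : (insert none (Set.image some (lam.cells : Set (ℕ × ℕ)))).Finite :=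
    ((Finset.finite_toSet _).image _).insert _
  refine (hfin.subset (t := {d | StepOK ν lam d}) ?_).to_subtype
  rintro d (⟨-, rfl⟩ | ⟨-, c, rfl, h, -⟩)
  · exact Or.inl rfl
  · exact Or.inr ⟨c, (YoungDiagram.mem_cells _).2 h.1, rfl⟩

theorem card_step_mv {ν lam : YoungDiagram} (h : Mv lam ν) :
    Nat.card {d // StepOK ν lam d} = 1 := by
  rw [Nat.card_eq_one_iff_unique]
  constructor
  · constructor
    rintro ⟨a, ha⟩ ⟨b, hb⟩
    apply Subtype.ext
    rcases ha with ⟨-, rfl⟩ | ⟨ha, -⟩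
    · rcases hb with ⟨-, rfl⟩ | ⟨hb, -⟩
      · rfl
      · exact absurd hb.symm h.ne
    · exact absurd ha.symm h.ne
  · exact ⟨⟨none, Or.inl ⟨(moveCorner_iff _ _).2 h.symm, rfl⟩⟩⟩

theorem card_step_self (lam : YoungDiagram) :
    Nat.card {d // StepOK lam lam d} = Nat.card (NF lam) := by
  symm
  refine Nat.card_congr (Equiv.ofBijective
    (fun c => ⟨some c.1, Or.inr ⟨rfl, c.1, rfl, c.2⟩⟩) ⟨?_, ?_⟩)
  · intro a b h
    have h' : some a.1 = some b.1 := congrArg Subtype.val h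
    exact Subtype.ext (Option.some_injective _ h')
  · rintro ⟨d, ⟨h, -⟩ | ⟨-, c, rfl, h⟩⟩
    · exact absurd rfl h.1
    · exact ⟨⟨c, h⟩, rfl⟩

theorem card_step_other {ν lam : YoungDiagram} (h : ¬ Mv lam ν) (hne : ν ≠ lam) :
    Nat.card {d // StepOK ν lam d} = 0 := by
  rw [Nat.card_eq_zero]
  left
  constructor
  rintro ⟨d, ⟨h', -⟩ | ⟨h', -⟩⟩
  · exact h ((moveCorner_iff _ _).1 h').symm
  · exact hne h'.symm

theorem card_NF {lam : YoungDiagram} (h : lam.rowLen 1 < lam.rowLen 0) :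
    Nat.card (NF lam) = (down (truncate lam)).card := by
  rw [← card_corners_down]
  have key : ∀ i j, IsCorner (truncate lam) (i, j) ↔ IsCorner lam (i + 1, j) := by
    intro i j
    simp only [isCorner_iff, rowLen_truncate]
  symm
  refine Nat.card_congr (Equiv.ofBijective
    (fun c => ⟨(c.1.1 + 1, c.1.2), (key _ _).1 c.2, ?_⟩) ⟨?_, ?_⟩)
  · rintro ⟨-, h2⟩
    have := lam.rowLen_anti 1 (c.1.1 + 1) (by omega)
    simp only at h2
    omega
  · rintro ⟨⟨i, j⟩, ha⟩ ⟨⟨i', j'⟩, hb⟩ he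
    have h' : (i + 1, j) = (i' + 1, j') := congrArg (fun x : NF lam => x.1) he
    simp only [Prod.mk.injEq] at h'
    apply Subtype.ext
    simp only [Prod.mk.injEq]
    omega
  · rintro ⟨⟨i, j⟩, h1, h2⟩
    rcases i with _ | i
    · exact absurd ⟨h1, rfl⟩ h2
    · exact ⟨⟨(i, j), (key _ _).2 h1⟩, rfl⟩

theorem kt_ext {k : ℕ} {μ lam : YoungDiagram} {S T : KroneckerTableau k μ lam}
    (h1 : ∀ i, S.seq i = T.seq i) (h2 : ∀ i, S.dist i = T.dist i) : S = T := by
  cases S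
  cases T
  congr
  · funext i
    exact h1 i
  · funext i
    exact h2 i

/-- Append a step. -/
def ktSnoc {k : ℕ} {μ ν lam : YoungDiagram} (T : KroneckerTableau k μ ν)
    (d : Option (ℕ × ℕ)) (hd : StepOK ν lam d) : KroneckerTableau (k + 1) μ lam where
  seq := Fin.snoc (α := fun _ => YoungDiagram) T.seq lam
  dist := Fin.snoc (α := fun _ => Option (ℕ × ℕ)) T.dist d
  init := by
    have : (0 : Fin (k + 1 + 1)) = Fin.castSucc 0 := rfl
    rw [this, Fin.snoc_castSucc]
    exact T.init
  final := by simp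
  step := by
    intro i
    refine Fin.lastCases ?_ (fun i => ?_) i
    · rw [Fin.snoc_castSucc (α := fun _ => YoungDiagram), Fin.succ_last, Fin.snoc_last,
        Fin.snoc_last, T.final]
      exact hd
    · rw [Fin.snoc_castSucc (α := fun _ => YoungDiagram), Fin.succ_castSucc,
        Fin.snoc_castSucc (α := fun _ => YoungDiagram), Fin.snoc_castSucc]
      exact T.step i

theorem kt_succ_bij (k n : ℕ) (μ lam : YoungDiagram) (hn : lam.card = n) :
    Function.Bijective (fun x : (Σ ν : {ν : YoungDiagram // ν.card = n},
      KroneckerTableau k μ ν.1 × {d // StepOK ν.1 lam d}) => ktSnoc x.2.1 x.2.2.1 x.2.2.2) := by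
  constructor
  · rintro ⟨⟨ν, hν⟩, S, d, hd⟩ ⟨⟨ν', hν'⟩, S', d', hd'⟩ h
    have hs : ∀ i : Fin (k + 1), S.seq i = S'.seq i := by
      intro i
      have := congrArg (fun T => KroneckerTableau.seq T i.castSucc) h
      simpa [ktSnoc] using this
    have ht : ∀ i : Fin k, S.dist i = S'.dist i := by
      intro i
      have := congrArg (fun T => KroneckerTableau.dist T i.castSucc) h
      simpa [ktSnoc] using this
    have hdd : d = d' := by
      have := congrArg (fun T => KroneckerTableau.dist T (Fin.last k)) h
      simpa [ktSnoc] using this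
    have hνν : ν = ν' := by
      have := hs (Fin.last k)
      rwa [S.final, S'.final] at this
    subst hνν
    subst hdd
    have : S = S' := kt_ext hs ht
    subst this
    rfl
  · intro T
    have hstep : StepOK (T.seq (Fin.last k).castSucc) lam (T.dist (Fin.last k)) := by
      have := T.step (Fin.last k)
      rw [Fin.succ_last, T.final] at this
      exact this
    refine ⟨⟨⟨T.seq (Fin.last k).castSucc, hstep.card_eq.trans hn⟩,
      { seq := fun i => T.seq i.castSucc
        dist := fun i => T.dist i.castSucc
        init := T.init
        final := rfl
        step := fun i => T.step i.castSucc },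
      T.dist (Fin.last k), hstep⟩, ?_⟩
    apply kt_ext
    · intro i
      refine Fin.lastCases ?_ (fun i => ?_) i
      · simp [ktSnoc, T.final]
      · simp [ktSnoc]
    · intro i
      refine Fin.lastCases ?_ (fun i => ?_) i
      · simp [ktSnoc]
      · simp [ktSnoc]

theorem finite_card_eq (n : ℕ) : Finite {ν : YoungDiagram // ν.card = n} :=
  ((finite_card_le n).subset (t := {ν : YoungDiagram | ν.card = n})
    (fun _ h => le_of_eq h)).to_subtype

theorem finite_kt (k : ℕ) (μ : YoungDiagram) : ∀ lam, Finite (KroneckerTableau k μ lam) := by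
  induction k with
  | zero =>
    intro lam
    refine Finite.of_injective (β := Unit) (fun _ => ()) ?_
    intro S T _
    apply kt_ext
    · intro i
      have : i = 0 := Fin.fin_one_eq_zero i
      rw [this, S.init, T.init]
    · intro i
      exact i.elim0
  | succ k ih =>
    intro lam
    have := finite_card_eq lam.card
    have := fun ν => finite_step ν lam
    exact Finite.of_surjective _ (kt_succ_bij k lam.card μ lam rfl).2

open Classical in
theorem kt_zero_card (μ lam : YoungDiagram) :
    (Nat.card (KroneckerTableau 0 μ lam) : ℚ) = if μ = lam then 1 else 0 := by
  split_ifs with h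
  · subst h
    have : Nat.card (KroneckerTableau 0 μ μ) = 1 := by
      rw [Nat.card_eq_one_iff_unique]
      constructor
      · constructor
        intro S T
        apply kt_ext
        · intro i
          have : i = 0 := Fin.fin_one_eq_zero i
          rw [this, S.init, T.init]
        · intro i
          exact i.elim0
      · exact ⟨{
          seq := fun _ => μ
          dist := fun i => i.elim0
          init := rfl
          final := rfl
          step := fun i => i.elim0 }⟩
    rw [this]
    simp
  · have : Nat.card (KroneckerTableau 0 μ lam) = 0 := by
      rw [Nat.card_eq_zero]
      left
      constructor
      intro T
      apply h
      exact T.init.symm.trans T.final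
    rw [this]
    simp

theorem kt_succ_card (k : ℕ) (μ lam : YoungDiagram) :
    (Nat.card (KroneckerTableau (k + 1) μ lam) : ℚ) =
      ∑ ν ∈ mv lam, (Nat.card (KroneckerTableau k μ ν) : ℚ) +
        Nat.card (KroneckerTableau k μ lam) * Nat.card (NF lam) := by
  classical
  have i1 := finite_card_eq lam.card
  have i2 := fun ν => finite_step ν lam
  have i3 := finite_kt k μ
  let _ : Fintype {ν : YoungDiagram // ν.card = lam.card} := Fintype.ofFinite _
  rw [← Nat.card_congr (Equiv.ofBijective _ (kt_succ_bij k lam.card μ lam rfl)), Nat.card_sigma]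
  push_cast
  simp only [Nat.card_prod]
  have hterm : ∀ ν : {ν : YoungDiagram // ν.card = lam.card},
      ((Nat.card (KroneckerTableau k μ ν.1) * Nat.card {d // StepOK ν.1 lam d} : ℕ) : ℚ) =
      (if Mv lam ν.1 then (Nat.card (KroneckerTableau k μ ν.1) : ℚ) else 0) +
      (if ν = ⟨lam, rfl⟩ then
        (Nat.card (KroneckerTableau k μ lam) : ℚ) * Nat.card (NF lam) else 0) := by
    rintro ⟨ν, hν⟩
    simp only [Subtype.mk.injEq]
    by_cases h1 : Mv lam ν
    · rw [card_step_mv h1, if_pos h1, if_neg h1.ne]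
      simp
    · by_cases h2 : ν = lam
      · subst h2
        rw [card_step_self, if_neg h1, if_pos rfl]
        simp
      · rw [card_step_other h1 h2, if_neg h1, if_neg h2]
        simp
  rw [Finset.sum_congr rfl (fun ν _ => hterm ν), Finset.sum_add_distrib]
  congr 1
  · rw [← Finset.sum_filter]
    refine Finset.sum_bij (fun ν _ => ν.1) ?_ ?_ ?_ ?_
    · intro ν h
      simpa using h
    · intro a _ b _ h
      exact Subtype.ext h
    · intro ν h
      exact ⟨⟨ν, (mem_mv.1 h).1⟩, by simpa using h, rfl⟩
    · intro _ _
      rfl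
  · simp

theorem truncate_rowDiagram (n : ℕ) : truncate (rowDiagram n) = ⊥ := by
  apply yd_ext
  intro i j
  rw [mem_truncate]
  simp [rowDiagram, YoungDiagram.mem_ofRowLens]

theorem card_rowDiagram (n : ℕ) : (rowDiagram n).card = n := by
  rw [card_truncate, truncate_rowDiagram]
  have : (rowDiagram n).rowLen 0 = n := by
    have h : ∀ j, (0, j) ∈ rowDiagram n ↔ j < n := by
      intro j
      simp [rowDiagram, YoungDiagram.mem_ofRowLens]
    simp only [YoungDiagram.mem_iff_lt_rowLen] at h
    have h1 := h ((rowDiagram n).rowLen 0)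
    have h2 := h n
    omega
  rw [this]
  simp [YoungDiagram.card]

theorem sum_mv_truncate (F : YoungDiagram → ℚ) (lam : YoungDiagram)
    (hF : ∀ γ, γ ∈ down (truncate lam) ∨ γ ∈ up (truncate lam) ∨ γ ∈ mv (truncate lam) →
      lam.card < γ.card + γ.rowLen 0 → F γ = 0) :
    ∑ ν ∈ mv lam, F (truncate ν) = ∑ γ ∈ down (truncate lam), F γ +
      ∑ γ ∈ up (truncate lam), F γ + ∑ γ ∈ mv (truncate lam), F γ := by
  classical
  rw [← Finset.sum_union, ← Finset.sum_union, ← Finset.sum_image (f := F) (g := truncate)]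
  · apply Finset.sum_subset
    · intro γ h
      obtain ⟨ν, hν, rfl⟩ := Finset.mem_image.1 h
      have h1 := mem_mv.1 hν
      have h2 := (mv_truncate_iff h1.1).1 h1
      simpa [or_assoc] using h2
    · intro γ h1 h2
      have h1' : γ ∈ down (truncate lam) ∨ γ ∈ up (truncate lam) ∨ γ ∈ mv (truncate lam) := by
        simpa [or_assoc] using h1
      apply hF γ h1'
      by_contra hcon
      push Not at hcon
      obtain ⟨ν, rfl, hc⟩ := exists_truncate hcon
      apply h2
      apply Finset.mem_image_of_mem
      rw [mem_mv, mv_truncate_iff hc]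
      simpa using h1'
  · intro a ha b hb h
    exact truncate_inj h ((mem_mv.1 ha).1.trans (mem_mv.1 hb).1.symm)
  · rw [Finset.disjoint_left]
    intro γ h1 h2
    have k2 := (mem_mv.1 h2).1
    rw [Finset.mem_union, mem_down, mem_up] at h1
    rcases h1 with h1 | h1
    · have := h1.2
      omega
    · have := h1.2
      omega
  · rw [Finset.disjoint_left]
    intro γ h1 h2
    have k1 := (mem_down.1 h1).2
    have k2 := (mem_up.1 h2).2
    omega

theorem kt_main (n k : ℕ) : ∀ lam : YoungDiagram, lam.card = n →
    k + (truncate lam).rowLen 0 ≤ n →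
    (Nat.card (KroneckerTableau k (rowDiagram n) lam) : ℚ) =
      gg k (truncate lam).card * fSYT (truncate lam) := by
  induction k with
  | zero =>
    intro lam hn _
    rw [kt_zero_card]
    split_ifs with h
    · rw [← h, truncate_rowDiagram, fSYT_bot]
      have : (⊥ : YoungDiagram).card = 0 := by simp [YoungDiagram.card]
      rw [this, gg_zero_zero]
      simp
    · rw [gg_zero_of_lt, zero_mul]
      by_contra hcon
      apply h
      apply truncate_inj
      · rw [truncate_rowDiagram]
        exact eq_of_le_card bot_le (by omega)
      · rw [card_rowDiagram, hn]
  | succ k ih =>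
    intro lam hn hk
    have hcard := card_truncate lam
    have hanti := lam.rowLen_anti 0 1 (by omega)
    have hrl := rowLen_truncate lam 0
    rw [zero_add] at hrl
    rw [kt_succ_card]
    have hsum : ∀ ν ∈ mv lam, (Nat.card (KroneckerTableau k (rowDiagram n) ν) : ℚ) =
        (fun γ => gg k γ.card * (fSYT γ : ℚ)) (truncate ν) := by
      intro ν hν
      have h1 := mem_mv.1 hν
      apply ih ν (h1.1.trans hn)
      have : (truncate ν).rowLen 0 ≤ (truncate lam).rowLen 0 + 1 := by
        rcases (mv_truncate_iff h1.1).1 h1 with h | h | h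
        · have := h.rowLen_le
          omega
        · have := h.rowLen_le
          omega
        · exact h.rowLen_le
      omega
    rw [Finset.sum_congr rfl hsum,
      sum_mv_truncate (fun γ => gg k γ.card * (fSYT γ : ℚ)), ih lam hn (by omega)]
    · have e1 : ∀ γ ∈ up (truncate lam), gg k γ.card * (fSYT γ : ℚ) =
          gg k ((truncate lam).card + 1) * fSYT γ := by
        intro γ h
        rw [(mem_up.1 h).2]
      have e2 : ∀ γ ∈ mv (truncate lam), gg k γ.card * (fSYT γ : ℚ) =
          gg k (truncate lam).card * fSYT γ := by
        intro γ h
        rw [(mem_mv.1 h).1]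
      rw [Finset.sum_congr rfl e1, Finset.sum_congr rfl e2, ← Finset.mul_sum, ← Finset.mul_sum,
        sum_up_fSYT _ _ rfl]
      have e3 : gg k (truncate lam).card * (fSYT (truncate lam) : ℚ) * Nat.card (NF lam) =
          gg k (truncate lam).card * ((down (truncate lam)).card * fSYT (truncate lam)) := by
        by_cases h : lam.rowLen 1 < lam.rowLen 0
        · rw [card_NF h]
          ring
        · rw [gg_zero_of_lt (by omega)]
          ring
      have e4 := sum_mv_fSYT (truncate lam)
      rw [e3]
      have e5 : gg k (truncate lam).card * ∑ γ ∈ mv (truncate lam), (fSYT γ : ℚ) +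
          gg k (truncate lam).card * ((down (truncate lam)).card * fSYT (truncate lam)) =
          gg k (truncate lam).card * ((truncate lam).card * fSYT (truncate lam)) := by
        rw [← e4]
        ring
      rw [add_assoc, e5]
      rcases Nat.eq_zero_or_pos (truncate lam).card with h0 | h0
      · rw [down_eq_empty h0, h0, gg_succ_zero]
        simp
      · have e6 : ∑ γ ∈ down (truncate lam), gg k γ.card * (fSYT γ : ℚ) =
            gg k ((truncate lam).card - 1) * fSYT (truncate lam) := by
          rw [fSYT_eq_sum_down h0, Finset.mul_sum]
          apply Finset.sum_congr rfl
          intro γ h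
          rw [(mem_down.1 h).2, Nat.add_sub_cancel]
        rw [e6]
        obtain ⟨m, hm⟩ := Nat.exists_eq_succ_of_ne_zero h0.ne'
        rw [hm, Nat.succ_eq_add_one, Nat.add_sub_cancel, gg_succ_succ]
        push_cast
        ring
    · intro γ h hlt
      have : k < γ.card := by
        rcases h with h | h | h
        · have h1 := (mem_down.1 h).2
          have h2 := (mem_down.1 h).rowLen_le
          omega
        · have h1 := (mem_up.1 h).2
          have h2 := (mem_up.1 h).rowLen_le
          omega
        · have h1 := (mem_mv.1 h).1
          have h2 := (mem_mv.1 h).rowLen_le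
          omega
      simp only [gg_zero_of_lt this, zero_mul]

/-- Corollary 3.4: with `a(k) = |KT^k_{(n_k), (n_k-ℓ, α)}|` for any admissible `n_k`,
`Σ_{k ≥ ℓ} a(k) x^k/k! = (f^α/ℓ!) e^{eˣ - x - 1} (eˣ - 1)^ℓ` in `ℚ[[x]]`. -/
theorem statement5 (ℓ : ℕ) (α : YoungDiagram) (hα : α.card = ℓ)
    (nk : ℕ → ℕ) (lamk : ℕ → YoungDiagram)
    (hnk : ∀ m, ℓ ≤ m → m + α.rowLen 0 ≤ nk m ∧ ℓ + α.rowLen 0 ≤ nk m)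
    (hlamk : ∀ m, ℓ ≤ m → truncate (lamk m) = α ∧ (lamk m).card = nk m) :
    (PowerSeries.mk fun m =>
        if ℓ ≤ m then
          (Nat.card (KroneckerTableau m (rowDiagram (nk m)) (lamk m)) : ℚ) / m.factorial
        else 0) =
      ((fSYT α : ℚ) / ℓ.factorial) •
        (psSubst (PowerSeries.exp ℚ) (PowerSeries.exp ℚ - PowerSeries.X - 1) *
          (PowerSeries.exp ℚ - 1) ^ ℓ) := by
  ext m
  rw [PowerSeries.coeff_mk, map_smul, smul_eq_mul]
  change _ = _ * PowerSeries.coeff m (HH ℓ)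
  have hm : (m.factorial : ℚ) ≠ 0 := by positivity
  have hl : (ℓ.factorial : ℚ) ≠ 0 := by positivity
  split_ifs with h
  · obtain ⟨h1, h2⟩ := hlamk m h
    have h3 := (hnk m h).1
    rw [kt_main (nk m) m (lamk m) h2 (by rw [h1]; exact h3), h1, hα, gg]
    field_simp
  · have h0 := gg_zero_of_lt (k := m) (l := ℓ) (by omega)
    unfold gg at h0
    have h1 : PowerSeries.coeff m (HH ℓ) = 0 := by
      rw [div_eq_zero_iff, mul_eq_zero] at h0
      tauto
    rw [h1, mul_zero]

end KroneckerPaper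
end

section
/- Let S be a finite linearly ordered set. The map assigning to a permutation of S the set partition of S whose blocks are the orbits (cycles) of the permutation restricts to a bijection from the set of permutations of S all of whose non-trivial cycles are decreasing onto the set of all set partitions of S. Consequently, for all m₁, m₂ ≥ 0, the number of permutations of {1, …, m} having exactly m₁ fixed points and exactly m₂ non-trivial cycles, all of which are decreasing, equals C(m, m₁) · p₂(m − m₁, m₂). -/
open Finset

namespace KroneckerPaper

/-- The set partition of `S` into the orbits (cycles) of a permutation of `S`. -/
def orbitBlocks {S : Type*} (π : Equiv.Perm S) : Set (Set S) :=
  Set.range fun x => {y | π.SameCycle x y}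

/-- `B` is the set of blocks of a set partition of `S`: blocks are nonempty and every
element of `S` lies in exactly one block. -/
def IsSetPartitionOn (S : Type*) (B : Set (Set S)) : Prop :=
  (∀ b ∈ B, b.Nonempty) ∧ ∀ x : S, ∃! b, b ∈ B ∧ x ∈ b

section helpers

/-- `z` is the cyclic predecessor of `x` in its class. -/
def IsNext {S : Type*} [LinearOrder S] (r : S → S → Prop) (x z : S) : Prop :=
  r x z ∧ ((z < x ∧ ∀ w, r x w → w < x → w ≤ z) ∨
    ((∀ w, r x w → x ≤ w) ∧ ∀ w, r x w → w ≤ z))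

theorem IsNext.unique {S : Type*} [LinearOrder S] {r : S → S → Prop} {x z z' : S}
    (h : IsNext r x z) (h' : IsNext r x z') : z = z' := by
  obtain ⟨h1, h2⟩ := h
  obtain ⟨h1', h2'⟩ := h'
  rcases h2 with ⟨a, b⟩ | ⟨a, b⟩ <;> rcases h2' with ⟨a', b'⟩ | ⟨a', b'⟩
  · exact le_antisymm (b' _ h1 a) (b _ h1' a')
  · exact absurd (a' _ h1) (not_le.2 a)
  · exact absurd (a _ h1') (not_le.2 a')
  · exact le_antisymm (b' _ h1) (b _ h1')

theorem exists_isNext {S : Type*} [Fintype S] [LinearOrder S] {r : S → S → Prop}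
    (hr : Equivalence r) (x : S) : ∃ z, IsNext r x z := by
  classical
  by_cases h : ∃ y, r x y ∧ y < x
  · obtain ⟨y, hy, hyx⟩ := h
    have hne : (univ.filter fun y => r x y ∧ y < x).Nonempty := ⟨y, by simp [hy, hyx]⟩
    have hm := Finset.max'_mem _ hne
    rw [Finset.mem_filter] at hm
    exact ⟨_, hm.2.1, Or.inl ⟨hm.2.2, fun w hw hwx => Finset.le_max' _ _ (by simp [hw, hwx])⟩⟩
  · push Not at h
    have hne : (univ.filter fun y => r x y).Nonempty := ⟨x, by simp [hr.refl x]⟩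
    have hm := Finset.max'_mem _ hne
    rw [Finset.mem_filter] at hm
    exact ⟨_, hm.2, Or.inr ⟨h, fun w hw => Finset.le_max' _ _ (by simp [hw])⟩⟩

theorem IsNext.inj {S : Type*} [LinearOrder S] {r : S → S → Prop}
    (hr : Equivalence r) {x y z : S} (h : IsNext r x z) (h' : IsNext r y z) : x = y := by
  have key : ∀ {x y : S}, IsNext r x z → IsNext r y z → ¬ x < y := by
    intro x y h h' hlt
    have hxy : r x y := hr.trans h.1 (hr.symm h'.1)
    rcases h'.2 with ⟨a', b'⟩ | ⟨a', b'⟩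
    · rcases h.2 with ⟨a, b⟩ | ⟨a, b⟩
      · exact absurd (b' x (hr.symm hxy) hlt) (not_le.2 a)
      · exact absurd (b y hxy) (not_le.2 a')
    · exact absurd (a' x (hr.symm hxy)) (not_le.2 hlt)
  exact le_antisymm (not_lt.1 (key h' h)) (not_lt.1 (key h h'))

/-- Existence: each equivalence relation is the orbit relation of a decreasing permutation. -/
theorem exists_dec {S : Type*} [Fintype S] [LinearOrder S] {r : S → S → Prop}
    (hr : Equivalence r) : ∃ π : Equiv.Perm S, DecCycles π ∧ ∀ x y, π.SameCycle x y ↔ r x y := by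
  choose f hf using exists_isNext (S := S) hr
  have hinj : Function.Injective f := by
    intro x y hxy
    have h := hf y
    rw [← hxy] at h
    exact (hf x).inj hr h
  let π : Equiv.Perm S := Equiv.ofBijective f (Finite.injective_iff_bijective.1 hinj)
  have hπ : ∀ x, π x = f x := fun x => rfl
  have h1 : ∀ x y, π.SameCycle x y → r x y := by
    intro x y h
    obtain ⟨n, -, hn⟩ := h.exists_pow_eq'
    have : ∀ n : ℕ, r x ((π ^ n) x) := by
      intro n
      induction n with
      | zero => simpa using hr.refl x
      | succ k ih =>
        rw [pow_succ', Equiv.Perm.mul_apply]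
        exact hr.trans ih (hf _).1
    rw [← hn]
    exact this n
  have h2 : ∀ x, ∃ y, π.SameCycle x y ∧ ∀ w, r x w → y ≤ w := by
    intro x
    induction x using WellFoundedLT.induction with
    | ind x ih =>
      rcases (hf x).2 with ⟨a, b⟩ | ⟨a, b⟩
      · obtain ⟨y, hy, hy2⟩ := ih (f x) a
        refine ⟨y, ?_, fun w hw => hy2 w (hr.trans (hr.symm (hf x).1) hw)⟩
        exact Equiv.Perm.SameCycle.trans ⟨1, by simp [hπ]⟩ hy
      · exact ⟨x, Equiv.Perm.SameCycle.refl _ _, a⟩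
  refine ⟨π, ?_, fun x y => ⟨h1 x y, fun h => ?_⟩⟩
  · rintro x - ⟨y, hy, hlt⟩
    rcases (hf x).2 with ⟨a, b⟩ | ⟨a, b⟩
    · exact a
    · exact absurd (a y (h1 _ _ hy)) (not_le.2 hlt)
  · obtain ⟨a, ha, ha'⟩ := h2 x
    obtain ⟨b, hb, hb'⟩ := h2 y
    have : a = b := le_antisymm (ha' _ (hr.trans h (h1 _ _ hb)))
      (hb' _ (hr.trans (hr.symm h) (h1 _ _ ha)))
    subst this
    exact ha.trans hb.symm

theorem DecCycles.isNext {S : Type*} [Fintype S] [LinearOrder S] {π : Equiv.Perm S}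
    (hd : DecCycles π) (x : S) : IsNext π.SameCycle x (π x) := by
  have hs : ∀ x, π.SameCycle x (π x) := fun x => ⟨1, by simp⟩
  -- a strictly smaller class element forces a descent
  have hd' : ∀ x, (∃ y, π.SameCycle x y ∧ y < x) → π x < x := by
    intro x hx
    refine hd x (fun hfix => ?_) hx
    obtain ⟨y, hy, hlt⟩ := hx
    have := hy.eq_of_left hfix
    exact hlt.ne this.symm
  have hmin : ∀ x, (∀ y, π.SameCycle x y → x ≤ y) → ∀ w, π.SameCycle x w → w ≤ π x := by
    classical
    intro x hx
    have hne : (univ.filter fun y => π.SameCycle x y).Nonempty :=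
      ⟨x, by simp [Equiv.Perm.SameCycle.refl]⟩
    obtain ⟨M, hM, hMax⟩ := Finset.exists_max_image _ id hne
    simp only [Finset.mem_filter, Finset.mem_univ, true_and, id] at hM hMax
    obtain ⟨z, hz⟩ := π.surjective M
    have hxz : π.SameCycle x z := hM.trans (hz ▸ (hs z).symm)
    have : x = z := by
      by_contra hne
      have h1 := hd' z ⟨x, hxz.symm, lt_of_le_of_ne (hx z hxz) hne⟩
      rw [hz] at h1
      exact absurd (hMax z hxz) (not_le.2 h1)
    rw [this, hz]
    rwa [← this]
  induction x using WellFoundedGT.induction with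
  | ind x ih =>
    refine ⟨hs x, ?_⟩
    by_cases h : ∃ y, π.SameCycle x y ∧ y < x
    · refine Or.inl ⟨hd' x h, fun w hw hwx => ?_⟩
      obtain ⟨p, hp⟩ := exists_isNext (Equiv.Perm.SameCycle.equivalence π) x
      have hpx : p < x := by
        rcases hp.2 with ⟨a, b⟩ | ⟨a, b⟩
        · exact a
        · exact absurd (a w hw) (not_le.2 hwx)
      have hmax : ∀ w, π.SameCycle x w → w < x → w ≤ p := by
        rcases hp.2 with ⟨a, b⟩ | ⟨a, b⟩
        · exact b
        · exact absurd (a w hw) (not_le.2 hwx)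
      obtain ⟨z, hz⟩ := π.surjective p
      have hxz : π.SameCycle x z := hp.1.trans (hz ▸ (hs z).symm)
      have hzx : x ≤ z := by
        by_contra hlt
        push Not at hlt
        have hzp := hmax z hxz hlt
        have hzmin : ∀ y, π.SameCycle z y → z ≤ y := by
          intro y hy
          by_contra hyz
          have := hd' z ⟨y, hy, not_le.1 hyz⟩
          rw [hz] at this
          exact absurd hzp (not_le.2 this)
        have := hmin z hzmin x hxz.symm
        rw [hz] at this
        exact absurd this (not_le.2 hpx)
      rcases hzx.eq_or_lt with rfl | hlt
      · rw [hz]; exact hmax w hw hwx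
      · have hn := ih z hlt
        rw [hz] at hn
        rcases hn.2 with ⟨a, b⟩ | ⟨a, b⟩
        · exact absurd (b x hxz.symm hlt) (not_le.2 hpx)
        · exact absurd (a x hxz.symm) (not_le.2 hlt)
    · push Not at h
      exact Or.inr ⟨h, hmin x h⟩

theorem dec_unique {S : Type*} [Fintype S] [LinearOrder S] {π σ : Equiv.Perm S}
    (hπ : DecCycles π) (hσ : DecCycles σ) (h : ∀ x y, π.SameCycle x y ↔ σ.SameCycle x y) :
    π = σ := by
  have h' : π.SameCycle = σ.SameCycle := by
    funext x y
    exact propext (h x y)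
  ext x
  have h1 := hπ.isNext x
  rw [h'] at h1
  exact h1.unique (hσ.isNext x)

theorem part_one (S : Type) (_ : Fintype S) (_ : LinearOrder S) :
    Set.BijOn orbitBlocks {π : Equiv.Perm S | DecCycles π} {B | IsSetPartitionOn S B} := by
  refine ⟨?_, ?_, ?_⟩
  · intro π _
    refine ⟨?_, fun x => ⟨{y | π.SameCycle x y}, ⟨⟨x, rfl⟩, Equiv.Perm.SameCycle.refl _ _⟩, ?_⟩⟩
    · rintro _ ⟨x, rfl⟩
      exact ⟨x, Equiv.Perm.SameCycle.refl _ _⟩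
    · rintro _ ⟨⟨z, rfl⟩, hz⟩
      ext y
      exact ⟨fun h => Equiv.Perm.SameCycle.trans (Equiv.Perm.SameCycle.symm hz) h,
        fun h => Equiv.Perm.SameCycle.trans hz h⟩
  · intro π hπ σ hσ h
    have key : ∀ {π σ : Equiv.Perm S}, orbitBlocks π = orbitBlocks σ →
        ∀ x y, π.SameCycle x y → σ.SameCycle x y := by
      intro π σ h x y hxy
      have hm : {y | π.SameCycle x y} ∈ orbitBlocks σ := h ▸ ⟨x, rfl⟩
      obtain ⟨z, hz⟩ := hm
      have hx : σ.SameCycle z x := by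
        have : x ∈ {y | π.SameCycle x y} := Equiv.Perm.SameCycle.refl _ _
        rw [← hz] at this
        exact this
      have hy : σ.SameCycle z y := by
        have : y ∈ {y | π.SameCycle x y} := hxy
        rw [← hz] at this
        exact this
      exact hx.symm.trans hy
    exact dec_unique hπ hσ fun x y => ⟨key h x y, key h.symm x y⟩
  · intro B hB
    obtain ⟨hne, hB⟩ := hB
    have hr : Equivalence (fun x y : S => ∃ b ∈ B, x ∈ b ∧ y ∈ b) := by
      refine ⟨fun x => ?_, ?_, ?_⟩
      · obtain ⟨b, ⟨hb, hx⟩, -⟩ := hB x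
        exact ⟨b, hb, hx, hx⟩
      · rintro x y ⟨b, hb, hx, hy⟩
        exact ⟨b, hb, hy, hx⟩
      · rintro x y z ⟨b, hb, hx, hy⟩ ⟨c, hc, hy', hz⟩
        have := (hB y).unique ⟨hb, hy⟩ ⟨hc, hy'⟩
        subst this
        exact ⟨b, hb, hx, hz⟩
    obtain ⟨π, hπ, h⟩ := exists_dec hr
    have hblk : ∀ x b, b ∈ B → x ∈ b → {y | π.SameCycle x y} = b := by
      intro x b hb hx
      ext y
      refine ⟨fun hy => ?_, fun hy => (h x y).2 ⟨b, hb, hx, hy⟩⟩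
      obtain ⟨c, hc, hx', hy'⟩ := (h x y).1 hy
      have := (hB x).unique ⟨hb, hx⟩ ⟨hc, hx'⟩
      subst this
      exact hy'
    refine ⟨π, hπ, ?_⟩
    ext b
    constructor
    · rintro ⟨x, rfl⟩
      obtain ⟨b, ⟨hb, hx⟩, -⟩ := hB x
      simp only [hblk x b hb hx]
      exact hb
    · intro hb
      obtain ⟨x, hx⟩ := hne b hb
      exact ⟨x, hblk x b hb hx⟩

theorem parts_eq {n : ℕ} (π : Equiv.Perm (Fin n)) (hfp : ∀ x, π x ≠ x)
    (s : Setoid (Fin n)) (hs : s = Equiv.Perm.SameCycle.setoid π) [DecidableRel s.r] :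
    (Finpartition.ofSetoid s).parts =
      π.cycleFactorsFinset.image Equiv.Perm.support := by
  have hpart : ∀ x, (Finpartition.ofSetoid s).part x =
      (π.cycleOf x).support := by
    intro x
    ext y
    rw [Finpartition.mem_part_ofSetoid_iff_rel, Equiv.Perm.mem_support_cycleOf_iff' (hfp x), hs]
    rfl
  ext b
  rw [Finset.mem_image]
  constructor
  · intro hb
    obtain ⟨x, hx⟩ := Finpartition.nonempty_of_mem_parts _ hb
    refine ⟨π.cycleOf x, ?_, ?_⟩
    · rw [Equiv.Perm.cycleOf_mem_cycleFactorsFinset_iff, Equiv.Perm.mem_support]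
      exact hfp x
    · rw [← hpart]
      exact Finpartition.part_eq_of_mem _ hb hx
  · rintro ⟨c, hc, rfl⟩
    have hcy := (Equiv.Perm.mem_cycleFactorsFinset_iff.1 hc).1
    obtain ⟨x, hx⟩ := hcy.nonempty_support
    rw [Equiv.Perm.cycle_is_cycleOf hx hc, ← hpart]
    exact (Finpartition.part_mem _).2 (Finset.mem_univ x)

theorem card_parts {n : ℕ} (π : Equiv.Perm (Fin n)) (hfp : ∀ x, π x ≠ x)
    (s : Setoid (Fin n)) (hs : s = Equiv.Perm.SameCycle.setoid π) [DecidableRel s.r] :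
    (Finpartition.ofSetoid s).parts.card = π.cycleType.card := by
  rw [parts_eq π hfp s hs, Finset.card_image_of_injOn, Equiv.Perm.cycleType_def]
  · simp
  · intro c hc d hd h
    have hcy := (Equiv.Perm.mem_cycleFactorsFinset_iff.1 hc).1
    obtain ⟨x, hx⟩ := hcy.nonempty_support
    have hx' : x ∈ d.support := by
      have h2 : c.support = d.support := h
      rwa [← h2]
    rw [Equiv.Perm.cycle_is_cycleOf hx hc, Equiv.Perm.cycle_is_cycleOf hx' hd]

theorem finpartition_ext {n : ℕ} {P Q : Finpartition (univ : Finset (Fin n))}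
    (h : ∀ x y, y ∈ P.part x ↔ y ∈ Q.part x) : P = Q := by
  have key : ∀ {P Q : Finpartition (univ : Finset (Fin n))},
      (∀ x y, y ∈ P.part x ↔ y ∈ Q.part x) → ∀ b ∈ P.parts, b ∈ Q.parts := by
    intro P Q h b hb
    obtain ⟨x, hx⟩ := P.nonempty_of_mem_parts hb
    have h1 : P.part x = b := P.part_eq_of_mem hb hx
    have h2 : P.part x = Q.part x := Finset.ext (h x)
    rw [← h1, h2]
    exact (Finpartition.part_mem _).2 (Finset.mem_univ x)
  exact Finpartition.ext (Finset.ext fun b => ⟨key h b, key (fun x y => (h x y).symm) b⟩)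

/-- Fixed-point-free permutations with decreasing cycles. -/
theorem card_derangements (n k : ℕ) :
    Nat.card {π : Equiv.Perm (Fin n) // DecCycles π ∧ (∀ x, π x ≠ x) ∧ π.cycleType.card = k} =
      p2 n k := by
  classical
  unfold p2
  refine Nat.card_congr (Equiv.ofBijective (fun π => ⟨Finpartition.ofSetoid
    (Equiv.Perm.SameCycle.setoid π.1), ?_, ?_⟩) ⟨?_, ?_⟩)
  · rw [card_parts π.1 π.2.2.1 _ rfl]
    exact π.2.2.2
  · intro b hb
    rw [parts_eq π.1 π.2.2.1 _ rfl, Finset.mem_image] at hb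
    obtain ⟨c, hc, rfl⟩ := hb
    exact (Equiv.Perm.mem_cycleFactorsFinset_iff.1 hc).1.two_le_card_support
  · rintro ⟨π, hπ⟩ ⟨σ, hσ⟩ h
    simp only [Subtype.mk.injEq] at h ⊢
    refine dec_unique hπ.1 hσ.1 fun x y => ?_
    have h1 := Finpartition.mem_part_ofSetoid_iff_rel
      (s := Equiv.Perm.SameCycle.setoid π) (a := x) (b := y)
    rw [h, Finpartition.mem_part_ofSetoid_iff_rel] at h1
    exact h1.symm
  · rintro ⟨P, hk, h2⟩
    have hr : Equivalence (fun x y => y ∈ P.part x) := by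
      refine ⟨fun x => P.mem_part (Finset.mem_univ x), fun {x y} h => ?_, fun {x y z} h h' => ?_⟩
      · rw [P.part_eq_of_mem (P.part_mem.2 (Finset.mem_univ x)) h]
        exact P.mem_part (Finset.mem_univ x)
      · rwa [P.part_eq_of_mem (P.part_mem.2 (Finset.mem_univ x)) h] at h'
    obtain ⟨π, hπ, h⟩ := exists_dec hr
    have hfp : ∀ x, π x ≠ x := by
      intro x hx
      have h3 := h2 _ (P.part_mem.2 (Finset.mem_univ x))
      obtain ⟨y, hy, hne⟩ := Finset.exists_mem_ne h3 x
      exact hne (((h x y).2 hy).eq_of_left hx).symm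
    have hP : Finpartition.ofSetoid (Equiv.Perm.SameCycle.setoid π) = P := by
      refine finpartition_ext fun x y => ?_
      rw [Finpartition.mem_part_ofSetoid_iff_rel]
      exact h x y
    refine ⟨⟨π, hπ, hfp, ?_⟩, Subtype.ext hP⟩
    rw [← card_parts π hfp _ rfl, hP, hk]

theorem dec_extendDomain {m n : ℕ} {p : Fin m → Prop} [DecidablePred p]
    (f : Fin n ≃o Subtype p) (g : Equiv.Perm (Fin n)) :
    DecCycles (g.extendDomain f.toEquiv) ↔ DecCycles g := by
  have hlt : ∀ x y : Fin n, (f.toEquiv x : Fin m) < f.toEquiv y ↔ x < y := fun x y => by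
    rw [Subtype.coe_lt_coe]; exact f.lt_iff_lt
  constructor
  · rintro h x hx ⟨y, hy, hlt'⟩
    have := h (f.toEquiv x) (by
        rw [Equiv.Perm.extendDomain_apply_image]
        intro h2
        exact hx (f.toEquiv.injective (Subtype.ext h2)))
      ⟨f.toEquiv y, Equiv.Perm.sameCycle_extendDomain.2 hy, (hlt _ _).2 hlt'⟩
    rw [Equiv.Perm.extendDomain_apply_image] at this
    exact (hlt _ _).1 this
  · rintro h x hx ⟨y, hy, hlt'⟩
    have hfix : ∀ y, ¬ p y → g.extendDomain f.toEquiv y = y := fun y hy =>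
      Equiv.Perm.extendDomain_apply_not_subtype _ _ hy
    have hpx : p x := by
      by_contra hpx
      exact hx (hfix x hpx)
    have hpy : p y := by
      by_contra hpy
      exact hlt'.ne (hy.symm.eq_of_left (hfix y hpy))
    obtain ⟨a, ha⟩ := f.toEquiv.surjective ⟨x, hpx⟩
    obtain ⟨b, hb⟩ := f.toEquiv.surjective ⟨y, hpy⟩
    obtain rfl : (f.toEquiv a : Fin m) = x := by rw [ha]
    obtain rfl : (f.toEquiv b : Fin m) = y := by rw [hb]
    rw [Equiv.Perm.extendDomain_apply_image] at hx ⊢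
    rw [Equiv.Perm.sameCycle_extendDomain] at hy
    rw [hlt] at hlt' ⊢
    exact h a (fun h2 => hx (by rw [h2])) ⟨b, hy, hlt'⟩

theorem card_fiber (m m₂ : ℕ) (F : Finset (Fin m)) :
    Nat.card {π : Equiv.Perm (Fin m) // DecCycles π ∧
      (Finset.univ.filter fun x => π x = x) = F ∧ π.cycleType.card = m₂} =
    p2 (m - F.card) m₂ := by
  classical
  rw [← card_derangements]
  have hc : Fintype.card {x // x ∉ F} = m - F.card := by
    rw [Fintype.card_subtype_compl]; simp
  let f : Fin (m - F.card) ≃o {x // x ∉ F} := (Fintype.orderIsoFinOfCardEq _ hc)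
  symm
  refine Nat.card_congr (Equiv.ofBijective
    (fun g => ⟨g.1.extendDomain f.toEquiv, ?_, ?_, ?_⟩) ⟨?_, ?_⟩)
  · exact (dec_extendDomain f g.1).2 g.2.1
  · ext x
    simp only [Finset.mem_filter, Finset.mem_univ, true_and]
    constructor
    · intro h
      by_contra hx
      obtain ⟨a, ha⟩ := f.toEquiv.surjective ⟨x, hx⟩
      obtain rfl : (f.toEquiv a : Fin m) = x := by rw [ha]
      rw [Equiv.Perm.extendDomain_apply_image] at h
      exact g.2.2.1 a (f.toEquiv.injective (Subtype.ext h))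
    · intro hx
      exact Equiv.Perm.extendDomain_apply_not_subtype _ _ (by simpa using hx)
  · rw [Equiv.Perm.cycleType_extendDomain]
    exact g.2.2.2
  · rintro ⟨g, hg⟩ ⟨g', hg'⟩ h
    simp only [Subtype.mk.injEq] at h ⊢
    exact Equiv.Perm.extendDomainHom_injective f.toEquiv h
  · rintro ⟨π, hπ, hF, hk⟩
    have hmem : ∀ x, x ∈ F ↔ π x = x := by
      intro x; rw [← hF]; simp
    have hst : ∀ x, π x ∉ F ↔ x ∉ F := by
      intro x
      rw [hmem, hmem, π.injective.eq_iff]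
    let g : Equiv.Perm (Fin (m - F.card)) := f.toEquiv.symm.permCongr (π.subtypePerm hst)
    have hg : g.extendDomain f.toEquiv = π := by
      ext x
      by_cases hx : x ∈ F
      · rw [Equiv.Perm.extendDomain_apply_not_subtype _ _ (by simpa using hx), (hmem x).1 hx]
      · rw [Equiv.Perm.extendDomain_apply_subtype (p := fun x => x ∉ F) _ _ hx]
        simp [g, Equiv.permCongr_apply]
    refine ⟨⟨g, ?_, ?_, ?_⟩, Subtype.ext hg⟩
    · rw [← dec_extendDomain f, hg]
      exact hπ
    · intro x hx
      have h1 : g.extendDomain f.toEquiv (f.toEquiv x) = f.toEquiv x := by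
        rw [Equiv.Perm.extendDomain_apply_image, hx]
      rw [hg, ← hmem] at h1
      exact (f.toEquiv x).2 h1
    · rw [← Equiv.Perm.cycleType_extendDomain f.toEquiv, hg, hk]

theorem part_two (m m₁ m₂ : ℕ) :
      Nat.card {π : Equiv.Perm (Fin m) // DecCycles π ∧
          (Finset.univ.filter fun x => π x = x).card = m₁ ∧ π.cycleType.card = m₂} =
        m.choose m₁ * p2 (m - m₁) m₂ := by
  classical
  rw [Nat.card_eq_fintype_card, Fintype.card_subtype,
    Finset.card_eq_sum_card_fiberwise (t := Finset.powersetCard m₁ (univ : Finset (Fin m)))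
      (f := fun π : Equiv.Perm (Fin m) => Finset.univ.filter fun x => π x = x)]
  · rw [Finset.sum_congr rfl (g := fun _ => p2 (m - m₁) m₂)]
    · simp
    · intro F hF
      rw [Finset.mem_powersetCard] at hF
      rw [← hF.2, ← card_fiber, Nat.card_eq_fintype_card, Fintype.card_subtype,
        Finset.filter_filter]
      congr 1
      ext π
      simp only [Finset.mem_filter, Finset.mem_univ, true_and]
      constructor
      · rintro ⟨⟨a, b, c⟩, d⟩
        exact ⟨a, d, c⟩
      · rintro ⟨a, d, c⟩
        exact ⟨⟨a, by rw [d], c⟩, d⟩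
  · intro π hπ
    have h1 := (Finset.mem_filter.1 (Finset.mem_coe.1 hπ)).2
    exact Finset.mem_coe.2 (Finset.mem_powersetCard.2 ⟨Finset.subset_univ _, h1.2.1⟩)

end helpers

/-- (i) For a finite linearly ordered set `S`, the orbit-partition map restricts to a
bijection from permutations of `S` all of whose non-trivial cycles are decreasing onto set
partitions of `S`.  (ii) Consequently the number of permutations of `{1, …, m}` with
exactly `m₁` fixed points and exactly `m₂` non-trivial cycles, all decreasing, is
`C(m, m₁) ⬝ p₂(m - m₁, m₂)`. -/
theorem statement8 :
    (∀ (S : Type) (_ : Fintype S) (_ : LinearOrder S),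
      Set.BijOn orbitBlocks {π : Equiv.Perm S | DecCycles π} {B | IsSetPartitionOn S B}) ∧
    (∀ m m₁ m₂ : ℕ,
      Nat.card {π : Equiv.Perm (Fin m) // DecCycles π ∧
          (Finset.univ.filter fun x => π x = x).card = m₁ ∧ π.cycleType.card = m₂} =
        m.choose m₁ * p2 (m - m₁) m₂) := by
  exact ⟨part_one, part_two⟩

end KroneckerPaper
end

section
/- Let n and k be positive integers with n ≥ k. Then Σ_{σ ∈ 𝔖_n} (fix(σ) − 1)^k = n! · Σ_{j=0}^{⌊k/2⌋} p₂(k, j), where fix(σ) denotes the number of fixed points of the permutation σ and the sum on the left is over all permutations of {1, …, n}; equivalently, the average of (fix(σ) − 1)^k over 𝔖_n equals the number of partitions of a k-element set into blocks all of size at least 2. (This is the multiplicity of the trivial character in the k-th Kronecker power of the irreducible character χ^{(n−1,1)} of 𝔖_n, whose value at σ is fix(σ) − 1.) -/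
open Finset

namespace KroneckerPaper

/-- The number of fixed points of a permutation of `Fin n`. -/
def fixCount {n : ℕ} (σ : Equiv.Perm (Fin n)) : ℕ :=
  (Finset.univ.filter fun x => σ x = x).card

/-- Functions with equal kernels differ by a permutation. -/
lemma exists_perm_of_ker {ι : Type*} {n : ℕ} (f g : ι → Fin n)
    (h : Setoid.ker f = Setoid.ker g) : ∃ σ : Equiv.Perm (Fin n), ∀ i, σ (f i) = g i := by
  classical
  have hfg : ∀ i j, f i = f j ↔ g i = g j := by
    intro i j
    have := congrArg (fun s : Setoid ι => s i j) h
    simpa [Setoid.ker_def] using this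
  let e0 : Set.range f → Set.range g := fun x => ⟨g x.2.choose, ⟨_, rfl⟩⟩
  have he0 : ∀ i, (e0 ⟨f i, ⟨i, rfl⟩⟩ : Fin n) = g i := by
    intro i
    have hx : ∃ j, f j = f i := ⟨i, rfl⟩
    exact (hfg _ _).1 hx.choose_spec
  have hb : Function.Bijective e0 := by
    constructor
    · rintro ⟨_, i, rfl⟩ ⟨_, j, rfl⟩ hij
      have := congrArg Subtype.val hij
      rw [he0, he0] at this
      exact Subtype.ext ((hfg _ _).2 this)
    · rintro ⟨_, i, rfl⟩
      exact ⟨⟨f i, ⟨i, rfl⟩⟩, Subtype.ext (he0 i)⟩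
  let e : {x // x ∈ Set.range f} ≃ {x // x ∈ Set.range g} := Equiv.ofBijective e0 hb
  refine ⟨e.extendSubtype, fun i => ?_⟩
  rw [Equiv.extendSubtype_apply_of_mem e (f i) ⟨i, rfl⟩]
  exact he0 i

/-- Orbits of `𝔖_n` on `ι → Fin n` are the equivalence relations on `ι`. -/
lemma card_orbits {ι : Type*} [Fintype ι] {n : ℕ} (h : Fintype.card ι ≤ n) :
    Nat.card (Quotient (MulAction.orbitRel (Equiv.Perm (Fin n)) (ι → Fin n))) =
      Nat.card (Setoid ι) := by
  classical
  refine Nat.card_congr (Equiv.ofBijective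
    (Quotient.lift (fun f => Setoid.ker f) ?_) ⟨?_, ?_⟩)
  · rintro f g ⟨σ, rfl⟩
    ext i j
    simp [Setoid.ker_def]
  · intro a b
    induction a using Quotient.inductionOn
    induction b using Quotient.inductionOn
    rename_i f g
    intro hfg
    obtain ⟨σ, hσ⟩ := exists_perm_of_ker g f hfg.symm
    exact Quotient.sound ⟨σ, funext hσ⟩
  · intro s
    have hc : Fintype.card (Quotient s) ≤ Fintype.card (Fin n) := by
      simpa using (Fintype.card_quotient_le s).trans h
    obtain ⟨e⟩ := Function.Embedding.nonempty_of_card_le hc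
    refine ⟨Quotient.mk _ (fun i => e (Quotient.mk s i)), ?_⟩
    ext i j
    change e (Quotient.mk s i) = e (Quotient.mk s j) ↔ s i j
    rw [EmbeddingLike.apply_eq_iff_eq]
    exact Quotient.eq

lemma sum_fix_pow (n : ℕ) (ι : Type*) [Fintype ι] (h : Fintype.card ι ≤ n) :
    ∑ σ : Equiv.Perm (Fin n), fixCount σ ^ Fintype.card ι =
      n.factorial * Nat.card (Setoid ι) := by
  classical
  have B := MulAction.sum_card_fixedBy_eq_card_orbits_mul_card_group
    (Equiv.Perm (Fin n)) (ι → Fin n)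
  rw [← Nat.card_eq_fintype_card (α := Quotient _), card_orbits h, Fintype.card_perm,
    Fintype.card_fin, mul_comm] at B
  rw [← B]
  refine Finset.sum_congr rfl fun σ _ => ?_
  have e : MulAction.fixedBy (ι → Fin n) σ ≃ (ι → {x : Fin n // σ x = x}) :=
    { toFun := fun f i => ⟨f.1 i, congrFun f.2 i⟩
      invFun := fun f => ⟨fun i => (f i).1, funext fun i => (f i).2⟩
      left_inv := fun _ => rfl
      right_inv := fun _ => rfl }
  rw [Fintype.card_congr e, Fintype.card_fun, Fintype.card_subtype]
  rfl

/-- Equivalence relations for which all elements of `t` are isolated. -/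
lemma card_isolated {ι : Type*} [Fintype ι] [DecidableEq ι] (t : Finset ι) :
    Nat.card {s : Setoid ι // ∀ i ∈ t, ∀ j, s i j → i = j} =
      Nat.card (Setoid {i // i ∈ tᶜ}) := by
  refine Nat.card_congr
    { toFun := fun s => s.1.comap Subtype.val
      invFun := fun r => ⟨⟨fun x y => x = y ∨ ∃ hx hy, r ⟨x, hx⟩ ⟨y, hy⟩, ?_, ?_, ?_⟩, ?_⟩
      left_inv := ?_
      right_inv := ?_ }
  · intro x; exact Or.inl rfl
  · rintro x y (h | ⟨hx, hy, h⟩)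
    · exact Or.inl h.symm
    · exact Or.inr ⟨hy, hx, r.symm h⟩
  · rintro x y z (rfl | ⟨hx, hy, h⟩) (rfl | ⟨hx', hy', h'⟩)
    · exact Or.inl rfl
    · exact Or.inr ⟨hx', hy', h'⟩
    · exact Or.inr ⟨hx, hy, h⟩
    · exact Or.inr ⟨hx, hy', r.trans h h'⟩
  · rintro i hi j (h | ⟨hx, hy, h⟩)
    · exact h
    · exact absurd hi (Finset.mem_compl.1 hx)
  · rintro ⟨s, hs⟩
    apply Subtype.ext
    apply Setoid.ext
    intro x y
    change (x = y ∨ ∃ (_ : x ∈ tᶜ) (_ : y ∈ tᶜ), s x y) ↔ s x y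
    constructor
    · rintro (rfl | ⟨_, _, h⟩)
      · exact s.refl _
      · exact h
    · intro h
      by_cases hx : x ∈ t
      · exact Or.inl (hs x hx y h)
      by_cases hy : y ∈ t
      · exact Or.inl (hs y hy x (s.symm h)).symm
      exact Or.inr ⟨Finset.mem_compl.2 hx, Finset.mem_compl.2 hy, h⟩
  · intro r
    apply Setoid.ext
    rintro ⟨x, hx⟩ ⟨y, hy⟩
    change (x = y ∨ ∃ hx hy, r ⟨x, hx⟩ ⟨y, hy⟩) ↔ _
    constructor
    · rintro (rfl | ⟨_, _, h⟩)
      · exact r.refl _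
      · exact h
    · intro h
      exact Or.inr ⟨hx, hy, h⟩

lemma finite_setoid (ι : Type*) [Finite ι] : Finite (Setoid ι) :=
  Finite.of_injective (fun (s : Setoid ι) (i j : ι) => s i j) fun s t h =>
    Setoid.ext fun i j => iff_of_eq (congrFun (congrFun h i) j)

lemma card_no_isolated (ι : Type*) [Fintype ι] [DecidableEq ι] :
    (Nat.card {s : Setoid ι // ∀ i, ∃ j, s i j ∧ i ≠ j} : ℤ) =
      ∑ t : Finset ι, (-1 : ℤ) ^ t.card * Nat.card (Setoid {i // i ∈ tᶜ}) := by
  classical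
  haveI := finite_setoid ι
  letI := Fintype.ofFinite (Setoid ι)
  have H := Finset.inclusion_exclusion_card_inf_compl (Finset.univ : Finset ι)
    (fun i => Finset.univ.filter fun s : Setoid ι => ∀ j, s i j → i = j)
  rw [Finset.powerset_univ] at H
  convert H using 2
  · rw [Nat.card_eq_fintype_card, Fintype.card_subtype]
    congr 1
    ext s
    simp [Finset.mem_inf]
  · rename_i t _
    rw [← card_isolated t, Nat.card_eq_fintype_card, Fintype.card_subtype]
    congr 3
    ext s
    simp [Finset.mem_inf]

lemma card_finpartition (k : ℕ) :
    Nat.card {P : Finpartition (Finset.univ : Finset (Fin k)) // ∀ b ∈ P.parts, 2 ≤ b.card} =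
      Nat.card {s : Setoid (Fin k) // ∀ i, ∃ j, s i j ∧ i ≠ j} := by
  classical
  have key : ∀ (P : Finpartition (Finset.univ : Finset (Fin k))) (i j : Fin k),
      P.part i = P.part j ↔ j ∈ P.part i := by
    intro P i j
    constructor
    · intro h
      rw [h]
      exact P.mem_part (Finset.mem_univ j)
    · intro h
      exact (P.part_eq_of_mem (P.part_mem.2 (Finset.mem_univ i)) h).symm
  let Φ : Finpartition (Finset.univ : Finset (Fin k)) → Setoid (Fin k) :=
    fun P => Setoid.ker P.part
  have hΦ : ∀ P i j, Φ P i j ↔ j ∈ P.part i := fun P i j => key P i j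
  have hb : Function.Bijective Φ := by
    constructor
    · intro P Q h
      have hp : ∀ i, P.part i = Q.part i := by
        intro i
        ext j
        rw [← hΦ, ← hΦ, h]
      have hparts : ∀ (R : Finpartition (Finset.univ : Finset (Fin k))),
          R.parts = Finset.univ.image R.part := by
        intro R
        ext b
        simp only [Finset.mem_image, Finset.mem_univ, true_and]
        constructor
        · intro hbR
          obtain ⟨i, hi⟩ := R.nonempty_of_mem_parts hbR
          exact ⟨i, R.part_eq_of_mem hbR hi⟩
        · rintro ⟨i, rfl⟩
          exact R.part_mem.2 (Finset.mem_univ i)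
      apply Finpartition.ext
      rw [hparts, hparts, funext hp]
    · intro s
      refine ⟨Finpartition.ofSetoid s, ?_⟩
      apply Setoid.ext
      intro i j
      rw [hΦ, Finpartition.mem_part_ofSetoid_iff_rel]
  refine Nat.card_congr (Equiv.subtypeEquiv (Equiv.ofBijective Φ hb) ?_)
  intro P
  change _ ↔ ∀ i, ∃ j, Φ P i j ∧ i ≠ j
  have hΦP := hΦ P
  constructor
  · intro h i
    have := h _ (P.part_mem.2 (Finset.mem_univ i))
    obtain ⟨j, hj, hne⟩ := Finset.exists_mem_ne (show 1 < (P.part i).card by omega) i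
    exact ⟨j, (hΦP i j).2 hj, hne.symm⟩
  · intro h b hbP
    obtain ⟨i, hi⟩ := P.nonempty_of_mem_parts hbP
    obtain ⟨j, hj, hne⟩ := h i
    rw [hΦP, P.part_eq_of_mem hbP hi] at hj
    exact Finset.one_lt_card.2 ⟨i, hi, j, hj, hne⟩

lemma sum_p2 (k : ℕ) : ∑ j ∈ Finset.range (k / 2 + 1), p2 k j =
    Nat.card {P : Finpartition (Finset.univ : Finset (Fin k)) //
      ∀ b ∈ P.parts, 2 ≤ b.card} := by
  classical
  rw [Nat.card_eq_fintype_card, Fintype.card_subtype,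
    Finset.card_eq_sum_card_fiberwise (f := fun P => P.parts.card)
      (t := Finset.range (k / 2 + 1))]
  · refine Finset.sum_congr rfl fun j _ => ?_
    rw [p2, Nat.card_eq_fintype_card, Fintype.card_subtype]
    congr 1
    ext P
    simp [and_comm]
  · intro P hP
    have hP' : ∀ b ∈ P.parts, 2 ≤ b.card := by simpa using hP
    have h1 := Finset.card_nsmul_le_sum P.parts (fun b => b.card) 2 hP'
    rw [P.sum_card_parts] at h1
    simp at h1 ⊢
    omega

/-- For `n ≥ k`, `Σ_{σ ∈ 𝔖_n} (fix σ - 1)^k = n! ⬝ Σ_{j=0}^{⌊k/2⌋} p₂(k, j)`: the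
multiplicity of the trivial character in `(χ^{(n-1,1)})^{⊗ k}` is the number of set
partitions of a `k`-set with no singleton blocks. -/
theorem statement9 (n k : ℕ) (hn : 1 ≤ n) (hk : 1 ≤ k) (hkn : k ≤ n) :
    ∑ σ : Equiv.Perm (Fin n), ((fixCount σ : ℤ) - 1) ^ k =
      (n.factorial : ℤ) * ∑ j ∈ Finset.range (k / 2 + 1), (p2 k j : ℤ) := by
  classical
  have h1 : ∀ σ : Equiv.Perm (Fin n), ((fixCount σ : ℤ) - 1) ^ k =
      ∑ t : Finset (Fin k), (-1 : ℤ) ^ t.card *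
        ((fixCount σ ^ Fintype.card {i // i ∈ tᶜ} : ℕ) : ℤ) := by
    intro σ
    rw [sub_eq_add_neg, add_comm, ← Fin.sum_pow_mul_eq_add_pow]
    refine Finset.sum_congr rfl fun t _ => ?_
    rw [Fintype.card_coe, Finset.card_compl, Fintype.card_fin]
    push_cast
    rfl
  have h2 : ∑ j ∈ Finset.range (k / 2 + 1), (p2 k j : ℤ) =
      ∑ t : Finset (Fin k), (-1 : ℤ) ^ t.card * Nat.card (Setoid {i // i ∈ tᶜ}) := by
    rw [← card_no_isolated, ← card_finpartition, ← sum_p2]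
    push_cast
    rfl
  rw [Finset.sum_congr rfl fun σ _ => h1 σ, Finset.sum_comm, h2, Finset.mul_sum]
  refine Finset.sum_congr rfl fun t _ => ?_
  have hc : Fintype.card {i // i ∈ tᶜ} ≤ n := by
    refine le_trans ?_ hkn
    simpa using Finset.card_le_univ tᶜ
  rw [← Finset.mul_sum, ← Nat.cast_sum, sum_fix_pow n _ hc]
  push_cast
  ring

end KroneckerPaper
end

section
/- For every integer n ≥ 2, Σ_{σ ∈ 𝔖_n} sgn(σ) · (fix(σ) − 1)^{n−1} = n!, where the sum is over all permutations of {1, …, n}, sgn(σ) is the sign of σ, and fix(σ) is the number of fixed points of σ. (Equivalently, the sign character occurs with multiplicity exactly 1 in the (n−1)-st Kronecker power of the irreducible character χ^{(n−1,1)} of 𝔖_n, whose value at σ is fix(σ) − 1.) -/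
open Finset

namespace KroneckerPaper

/-- The signed generating polynomial of fixed points. -/
lemma sign_gen (n : ℕ) :
    ∑ σ : Equiv.Perm (Fin n), (Equiv.Perm.sign σ : ℤ) • (Polynomial.X : Polynomial ℤ) ^ fixCount σ
      = (Polynomial.X - 1) ^ n + (n : ℤ) • (Polynomial.X - 1) ^ (n - 1) := by
  have h := Matrix.eval_charpoly
    (Matrix.vecMulVec (fun _ : Fin n => (-1 : Polynomial ℤ)) (fun _ => 1)) (Polynomial.X - 1)
  rw [Matrix.charpoly_vecMulVec, Matrix.det_apply] at h
  have h2 : ∀ σ : Equiv.Perm (Fin n),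
      ∏ i, (Matrix.scalar (Fin n) (Polynomial.X - 1 : Polynomial ℤ) -
        Matrix.vecMulVec (fun _ : Fin n => (-1 : Polynomial ℤ)) (fun _ => 1) :
        Matrix (Fin n) (Fin n) (Polynomial ℤ)) (σ i) i
      = Polynomial.X ^ fixCount σ := by
    intro σ
    rw [fixCount, ← Finset.prod_const, Finset.prod_filter]
    refine Finset.prod_congr rfl fun i _ => ?_
    by_cases hi : σ i = i
    · simp [hi, Matrix.vecMulVec_apply]
    · simp [hi, Matrix.vecMulVec_apply, Matrix.diagonal_apply_ne]
  simp_rw [h2] at h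
  simp only [Units.smul_def] at h
  rw [← h]
  simp [dotProduct]

/-- The linear functional `X ^ k ↦ (k - 1) ^ m`. -/
noncomputable def functional (m : ℕ) : Polynomial ℤ →ₗ[ℤ] ℤ :=
  Polynomial.lsum fun k => LinearMap.mulLeft ℤ (((k : ℤ) - 1) ^ m)

lemma functional_C_X_pow (m k : ℕ) (c : ℤ) :
    functional m (c • Polynomial.X ^ k) = c * ((k : ℤ) - 1) ^ m := by
  rw [map_smul, smul_eq_mul]
  congr 1
  simp only [functional, Polynomial.lsum_apply]
  rw [← Polynomial.monomial_one_right_eq_X_pow, Polynomial.sum_monomial_index] <;> simp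

lemma functional_pow (m r : ℕ) :
    functional m ((Polynomial.X - 1) ^ r) =
      (fwdDiff (1 : ℤ))^[r] (fun x : ℤ => x ^ m) (-1) := by
  rw [fwdDiff_iter_eq_sum_shift, sub_eq_add_neg, add_pow, map_sum]
  refine Finset.sum_congr rfl fun k _ => ?_
  have : (Polynomial.X : Polynomial ℤ) ^ k * (-1) ^ (r - k) * (r.choose k : Polynomial ℤ)
      = ((-1 : ℤ) ^ (r - k) * r.choose k) • Polynomial.X ^ k := by
    rw [zsmul_eq_mul]
    push_cast
    ring
  rw [this, functional_C_X_pow]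
  simp only [smul_eq_mul, nsmul_eq_mul, mul_one]
  rw [sub_eq_neg_add]

/-- For `n ≥ 2`, `Σ_{σ ∈ 𝔖_n} sgn(σ) (fix σ - 1)^{n-1} = n!`: the sign character occurs
with multiplicity exactly `1` in `(χ^{(n-1,1)})^{⊗ (n-1)}`. -/
theorem statement10 (n : ℕ) (hn : 2 ≤ n) :
    ∑ σ : Equiv.Perm (Fin n), (Equiv.Perm.sign σ : ℤ) * ((fixCount σ : ℤ) - 1) ^ (n - 1) =
      (n.factorial : ℤ) := by
  have h := congrArg (functional (n - 1)) (sign_gen n)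
  rw [map_sum, map_add, map_smul, functional_pow, functional_pow,
    fwdDiff_iter_pow_eq_zero_of_lt (by omega), fwdDiff_iter_eq_factorial] at h
  simp only [functional_C_X_pow] at h
  rw [h]
  obtain ⟨m, rfl⟩ : ∃ m, n = m + 1 := ⟨n - 1, by omega⟩
  simp [Nat.factorial_succ]

end KroneckerPaper
end

section
/- Let n and k be positive integers and λ = (λ₁, …, λ_m) a partition of n. If k < n − λ₁, then there is no Kronecker tableau of length k, initial shape (n) and final shape λ; that is, KT^k_{(n),λ} is empty. -/
open Finset

namespace KroneckerPaper

/-- Number of cells outside the first row. -/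
def lowCount (μ : YoungDiagram) : ℕ := (μ.cells.filter fun c => ¬ c.1 = 0).card

theorem lowCount_move {μ μ' : YoungDiagram} (h : MoveCorner μ μ') :
    lowCount μ' ≤ lowCount μ + 1 := by
  obtain ⟨-, c, c', -, -, -, h⟩ := h
  unfold lowCount
  rw [h]
  refine le_trans (Finset.card_le_card (t := insert c' (μ.cells.filter fun c => ¬ c.1 = 0)) ?_)
    (Finset.card_insert_le _ _)
  intro x hx
  simp only [Finset.mem_filter, Finset.mem_insert, Finset.mem_erase] at hx ⊢
  tauto

theorem lowCount_row (n : ℕ) : lowCount (rowDiagram n) = 0 := by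
  unfold lowCount
  rw [Finset.card_eq_zero, Finset.filter_eq_empty_iff]
  intro x hx
  rw [YoungDiagram.mem_cells, rowDiagram, YoungDiagram.mem_ofRowLens] at hx
  obtain ⟨h, -⟩ := hx
  simp only [List.length_singleton] at h
  omega

theorem rowLen_add_lowCount (μ : YoungDiagram) : μ.rowLen 0 + lowCount μ = μ.card := by
  rw [YoungDiagram.rowLen_eq_card]
  exact Finset.card_filter_add_card_filter_not (s := μ.cells) (fun c => c.1 = 0)

/-- If `k < n - λ₁` then there is no Kronecker tableau of length `k`, initial shape `(n)`
and final shape `λ`. -/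
theorem statement11 (n k : ℕ) (hn : 1 ≤ n) (hk : 1 ≤ k) (lam : YoungDiagram)
    (hcard : lam.card = n) (h : k < n - lam.rowLen 0) :
    IsEmpty (KroneckerTableau k (rowDiagram n) lam) := by
  refine ⟨fun T => ?_⟩
  have key : ∀ i : Fin (k + 1), lowCount (T.seq i) ≤ i.val := by
    intro i
    induction i using Fin.induction with
    | zero => simp [T.init, lowCount_row]
    | succ i ih =>
      simp only [Fin.val_castSucc, Fin.val_succ] at ih ⊢
      rcases T.step i with ⟨hm, -⟩ | ⟨he, -⟩
      · have := lowCount_move hm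
        omega
      · rw [he]
        omega
  have h1 := key (Fin.last k)
  rw [T.final, Fin.val_last] at h1
  have h2 := rowLen_add_lowCount lam
  omega

end KroneckerPaper
end
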